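/- arXiv:1508.03871 — 12 statements merged into one kernel-verified Lean document; each statement's English description precedes it below -/
import Mathlib

section
/- Fix $\alpha\in(0,1)$, integers $N\ge 1$, $M\ge 0$, $V\ge 1$ with $M+V<N$, a set $\mathcal N\subseteq[N]$ with $|\mathcal N|=V$, and $\mathcal I\subseteq[N]\setminus\mathcal N$ with $|\mathcal I|=M$. For each $K$, let $S_1,\dots,S_K$ be i.i.d. random subsets of $[N]$ with the conditioned Bernoulli$(\alpha)$ law, and set $X_i=\{k\in[K]: i\in S_k\}$. Then for every $\epsilon>0$, $\Pr\Bigl(\Bigl|\tfrac1K\bigl|\bigcap_{i\in([N]\setminus\mathcal N)\setminus\mathcal I}\overline X_{i,\mathcal I}\bigr| - Z_{M,V}\Bigr|<\epsilon\Bigr)\to 1$ as $K\to\infty$, where $Z_{M,V}=\dfrac{(1-\alpha)^{-M-V}-(1-\alpha)^{-M}}{(1-\alpha)^{-N}-1}$. -/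
section helpers

lemma sum_fin_succ_fun {σ : Type*} [Fintype σ] (n : ℕ) (g : (Fin (n+1) → σ) → ℝ) :
    ∑ ω : Fin (n+1) → σ, g ω = ∑ a : σ, ∑ ω : Fin n → σ, g (Fin.cons a ω) := by
  rw [← Fintype.sum_prod_type']
  exact (Fintype.sum_equiv (Fin.consEquiv (fun _ : Fin (n+1) => σ)) _ _ (fun x => rfl)).symm

lemma moments {σ : Type*} [Fintype σ] (w f : σ → ℝ) (v : ℝ) (h1 : ∑ s, w s = 1)
    (h0 : ∑ s, w s * f s = 0) (hv : ∑ s, w s * f s ^ 2 = v) (n : ℕ) :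
    (∑ ω : Fin n → σ, ∏ k, w (ω k)) = 1 ∧
    (∑ ω : Fin n → σ, (∏ k, w (ω k)) * (∑ k, f (ω k))) = 0 ∧
    (∑ ω : Fin n → σ, (∏ k, w (ω k)) * (∑ k, f (ω k)) ^ 2) = n * v := by
  induction n with
  | zero => simp
  | succ n ih =>
    obtain ⟨i1, i2, i3⟩ := ih
    refine ⟨?_, ?_, ?_⟩
    · rw [sum_fin_succ_fun]
      simp only [Fin.prod_univ_succ, Fin.cons_zero, Fin.cons_succ]
      simp only [← Finset.mul_sum, i1, mul_one, h1]
    · rw [sum_fin_succ_fun]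
      simp only [Fin.prod_univ_succ, Fin.sum_univ_succ, Fin.cons_zero, Fin.cons_succ]
      have : ∀ (a : σ) (ω : Fin n → σ),
          (w a * ∏ k, w (ω k)) * (f a + ∑ k, f (ω k)) =
          (w a * f a) * (∏ k, w (ω k)) + w a * ((∏ k, w (ω k)) * ∑ k, f (ω k)) := by
        intros; ring
      simp only [this, Finset.sum_add_distrib, ← Finset.mul_sum, i1, i2]
      simp [h0]
    · rw [sum_fin_succ_fun]
      simp only [Fin.prod_univ_succ, Fin.sum_univ_succ, Fin.cons_zero, Fin.cons_succ]
      have : ∀ (a : σ) (ω : Fin n → σ),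
          (w a * ∏ k, w (ω k)) * (f a + ∑ k, f (ω k)) ^ 2 =
          (w a * f a ^ 2) * (∏ k, w (ω k)) + (2 * (w a * f a)) * ((∏ k, w (ω k)) * ∑ k, f (ω k))
           + w a * ((∏ k, w (ω k)) * (∑ k, f (ω k)) ^ 2) := by
        intros; ring
      simp only [this, Finset.sum_add_distrib, ← Finset.mul_sum, i1, i2, i3]
      rw [← Finset.sum_mul, ← Finset.sum_mul, ← Finset.sum_mul, hv, h1]
      push_cast; ring

open Classical in
lemma wlln {σ : Type*} [Fintype σ] (w : σ → ℝ) (hw : ∀ s, 0 ≤ w s) (h1 : ∑ s, w s = 1)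
    (P : σ → Prop) (p : ℝ) (hp : ∑ s, (if P s then w s else 0) = p) (ε : ℝ) (hε : 0 < ε) :
    Filter.Tendsto (fun K : ℕ => ∑ ω : Fin K → σ,
      (if abs (((Finset.univ.filter fun k : Fin K => P (ω k)).card : ℝ) / K - p) < ε
        then ∏ k, w (ω k) else 0)) Filter.atTop (nhds 1) := by
  set f : σ → ℝ := fun s => (if P s then 1 else 0) - p with hf
  have h0 : ∑ s, w s * f s = 0 := by
    simp only [hf, mul_sub, Finset.sum_sub_distrib, ← Finset.sum_mul, h1, mul_ite, mul_one,
      mul_zero, hp]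
    ring
  obtain ⟨v, hv⟩ : ∃ v, ∑ s, w s * f s ^ 2 = v := ⟨_, rfl⟩
  have hpos : ∀ (K : ℕ) (ω : Fin K → σ), 0 ≤ ∏ k, w (ω k) :=
    fun K ω => Finset.prod_nonneg fun k _ => hw _
  have hlim : Filter.Tendsto (fun K : ℕ => 1 - (v / ε ^ 2) / (K : ℝ)) Filter.atTop (nhds 1) := by
    simpa using (tendsto_const_div_atTop_nhds_zero_nat (v / ε ^ 2)).const_sub 1
  refine tendsto_of_tendsto_of_tendsto_of_le_of_le' hlim tendsto_const_nhds ?_ ?_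
  · filter_upwards [Filter.eventually_gt_atTop 0] with K hK
    have hK' : (0:ℝ) < K := by exact_mod_cast hK
    obtain ⟨m1, -, m3⟩ := moments w f v h1 h0 hv K
    have e : 1 - (v / ε ^ 2) / (K : ℝ) = ∑ ω : Fin K → σ, ((∏ k, w (ω k)) -
        ((∏ k, w (ω k)) * (∑ k, f (ω k)) ^ 2) * (1 / (ε ^ 2 * K ^ 2))) := by
      rw [Finset.sum_sub_distrib, ← Finset.sum_mul, m1, m3]
      field_simp
    rw [e]
    apply Finset.sum_le_sum
    intro ω _
    have hs : ∑ k, f (ω k) = K * (((Finset.univ.filter fun k : Fin K => P (ω k)).card : ℝ) / K - p) := by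
      simp only [hf, Finset.sum_sub_distrib, Finset.sum_boole, Finset.sum_const, Finset.card_univ,
        Fintype.card_fin, nsmul_eq_mul]
      field_simp
    rw [hs]
    generalize ((Finset.univ.filter fun k : Fin K => P (ω k)).card : ℝ) / K - p = x
    have hq := hpos K ω
    have e2 : (∏ k, w (ω k)) * (K * x) ^ 2 * (1 / (ε ^ 2 * K ^ 2)) =
      (∏ k, w (ω k)) * (x ^ 2 / ε ^ 2) := by field_simp
    rw [e2]
    split_ifs with h
    · have : 0 ≤ (∏ k, w (ω k)) * (x ^ 2 / ε ^ 2) := by positivity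
      linarith
    · have : 1 ≤ x ^ 2 / ε ^ 2 := by
        rw [le_div_iff₀ (by positivity), one_mul, ← sq_abs x]
        exact pow_le_pow_left₀ hε.le (not_lt.mp h) 2
      nlinarith
  · refine Filter.Eventually.of_forall fun K => ?_
    rw [← (moments w f v h1 h0 hv K).1]
    apply Finset.sum_le_sum
    intro ω _
    split_ifs
    · exact le_rfl
    · exact hpos K ω

lemma sum_powerset_bern (α : ℝ) (N : ℕ) (T : Finset (Fin N)) :
    ∑ s ∈ T.powerset, α ^ s.card * (1 - α) ^ (N - s.card) = (1 - α) ^ (N - T.card) := by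
  have h := Finset.sum_pow_mul_eq_add_pow α (1 - α) T
  have hT : T.card ≤ N := by simpa using Finset.card_le_univ T
  have : ∀ s ∈ T.powerset, α ^ s.card * (1 - α) ^ (N - s.card) =
      (α ^ s.card * (1 - α) ^ (T.card - s.card)) * (1 - α) ^ (N - T.card) := by
    intro s hs
    have := Finset.card_le_card (Finset.mem_powerset.mp hs)
    rw [mul_assoc, ← pow_add]
    congr 2; omega
  rw [Finset.sum_congr rfl this, ← Finset.sum_mul, h]
  simp

end helpers


open Classical in
/-- Lemma 5 of the paper: Fix `α ∈ (0,1)`, `M ≥ 0`, `V ≥ 1` with `M + V < N`,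
a set `𝒩 ⊆ [N]` with `|𝒩| = V` and `I ⊆ [N] \ 𝒩` with `|I| = M`.  For each `K`, let
`S 1, …, S K` be i.i.d. random subsets of `[N]` with the conditioned Bernoulli(α) law
(an outcome is `ω : Fin K → Finset (Fin N)`, with probability `∏ k, w (ω k)` where
`w s = α^|s| (1-α)^(N-|s|) / (1-(1-α)^N)` for `s ≠ ∅` and `w ∅ = 0`), and let
`X i = {k ∈ [K] : i ∈ S k}`.  Then for every `ε > 0`, the probability that
`| (1/K) |⋂_{i ∈ ([N] \ 𝒩) \ I} X̄_{i,I}| - Z_{M,V} | < ε` tends to `1` as `K → ∞`,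
where `X̄_{i,I} = (⋃_{j ∉ I} X j) \ X i` and
`Z_{M,V} = ((1-α)^{-M-V} - (1-α)^{-M}) / ((1-α)^{-N} - 1)`. -/
theorem stmt_4 (α : ℝ) (hα0 : 0 < α) (hα1 : α < 1) (N M V : ℕ) (hV : 1 ≤ V)
    (hMVN : M + V < N) (𝒩 : Finset (Fin N)) (h𝒩 : 𝒩.card = V)
    (I : Finset (Fin N)) (hI𝒩 : I ⊆ 𝒩ᶜ) (hI : I.card = M)
    (ε : ℝ) (hε : 0 < ε) :
    Filter.Tendsto (fun K : ℕ =>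
      ∑ ω : Fin K → Finset (Fin N),
        (if
            abs ((((𝒩ᶜ \ I).inf fun i =>
                  (Iᶜ.biUnion fun j => Finset.univ.filter fun k : Fin K => j ∈ ω k) \
                    (Finset.univ.filter fun k : Fin K => i ∈ ω k)).card : ℝ) / K
              - ((1 - α) ^ (-((M : ℤ) + (V : ℤ))) - (1 - α) ^ (-(M : ℤ))) /
                  ((1 - α) ^ (-(N : ℤ)) - 1)) < ε
          then ∏ k : Fin K,
            (if ω k = ∅ then 0
              else α ^ (ω k).card * (1 - α) ^ (N - (ω k).card) / (1 - (1 - α) ^ N))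
          else 0))
      Filter.atTop (nhds 1) := by
  have hb0 : 0 < 1 - α := by linarith
  have hb1 : 1 - α < 1 := by linarith
  have hD : 0 < 1 - (1 - α) ^ N := by
    have := pow_lt_one₀ hb0.le hb1 (show N ≠ 0 by omega)
    linarith
  set w : Finset (Fin N) → ℝ := fun s => if s = ∅ then 0
      else α ^ s.card * (1 - α) ^ (N - s.card) / (1 - (1 - α) ^ N) with hw
  have hw0 : ∀ s, 0 ≤ w s := by
    intro s
    simp only [hw]
    split_ifs
    · exact le_rfl
    · positivity
  have hw1 : ∑ s, w s = 1 := by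
    have h := sum_powerset_bern α N Finset.univ
    have h' : ∀ s : Finset (Fin N), w s = (α ^ s.card * (1 - α) ^ (N - s.card)
        - if s = ∅ then (1 - α) ^ N else 0) / (1 - (1 - α) ^ N) := by
      intro s
      simp only [hw]
      split_ifs with hs
      · simp [hs]
      · simp
    simp only [Finset.powerset_univ, Finset.card_univ, Fintype.card_fin, Nat.sub_self, pow_zero] at h
    rw [Finset.sum_congr rfl fun s _ => h' s, ← Finset.sum_div, Finset.sum_sub_distrib, h]
    simp
    exact hD.ne'
  set P : Finset (Fin N) → Prop := fun s => s ⊆ 𝒩 ∪ I ∧ ¬ s ⊆ I with hP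
  have hdisj : Disjoint 𝒩 I := by
    rw [Finset.disjoint_left]
    intro a ha hb
    exact (Finset.mem_compl.mp (hI𝒩 hb)) ha
  have hcard : (𝒩 ∪ I).card = M + V := by
    rw [Finset.card_union_of_disjoint hdisj]; omega
  have hsum : ∑ s, (if P s then w s else 0) =
      ((1 - α) ^ (-((M : ℤ) + (V : ℤ))) - (1 - α) ^ (-(M : ℤ))) / ((1 - α) ^ (-(N : ℤ)) - 1) := by
    have hA := sum_powerset_bern α N (𝒩 ∪ I)
    have hB := sum_powerset_bern α N I
    have e1 : ∑ s, (if P s then w s else 0) =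
        ∑ s ∈ (𝒩 ∪ I).powerset \ I.powerset,
          α ^ s.card * (1 - α) ^ (N - s.card) / (1 - (1 - α) ^ N) := by
      rw [← Finset.sum_filter]
      apply Finset.sum_congr
      · ext s; simp only [hP, Finset.mem_filter, Finset.mem_univ, true_and, Finset.mem_sdiff, Finset.mem_powerset]
      · intro s hs
        have : s ≠ ∅ := by
          rintro rfl
          simp at hs
        simp [hw, this]
    have e2 := Finset.sum_sdiff (f := fun s : Finset (Fin N) => α ^ s.card * (1 - α) ^ (N - s.card))
      (Finset.powerset_mono.mpr (Finset.subset_union_right (s₁ := 𝒩) (s₂ := I)))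
    rw [e1, ← Finset.sum_div]
    rw [hA, hB] at e2
    rw [eq_sub_of_add_eq e2, hcard, hI]
    have hz : ∀ m : ℕ, m ≤ N → (1 - α) ^ (N - m) = (1 - α) ^ N * (1 - α) ^ (-(m : ℤ)) := by
      intro m hm
      rw [zpow_neg, zpow_natCast, pow_sub₀ _ hb0.ne' hm]
    rw [hz _ hMVN.le, hz M (by omega), ← mul_sub, zpow_neg _ (N : ℤ), zpow_natCast]
    push_cast
    have hN : (1 - α) ^ N ≠ 0 := by positivity
    have hD2 : ((1 - α) ^ N)⁻¹ - 1 ≠ 0 := by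
      have : ((1 - α) ^ N)⁻¹ - 1 = (1 - (1 - α) ^ N) / (1 - α) ^ N := by field_simp
      rw [this]; positivity
    rw [div_eq_div_iff hD.ne' hD2]
    field_simp
  have key := wlln w hw0 hw1 P
    (((1 - α) ^ (-((M : ℤ) + (V : ℤ))) - (1 - α) ^ (-(M : ℤ))) / ((1 - α) ^ (-(N : ℤ)) - 1))
    (by rw [← hsum]; apply Finset.sum_congr rfl; intro s _; congr) ε hε
  have hset : ∀ (K : ℕ) (ω : Fin K → Finset (Fin N)),
      ((𝒩ᶜ \ I).inf fun i =>
        (Iᶜ.biUnion fun j => Finset.univ.filter fun k : Fin K => j ∈ ω k) \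
          (Finset.univ.filter fun k : Fin K => i ∈ ω k)) =
      Finset.univ.filter fun k : Fin K => P (ω k) := by
    intro K ω
    have hne : (𝒩ᶜ \ I).Nonempty := by
      have : ((𝒩 ∪ I)ᶜ).Nonempty := by
        rw [← Finset.card_pos, Finset.card_compl, hcard, Fintype.card_fin]; omega
      rwa [Finset.compl_union, ← Finset.sdiff_eq_inter_compl] at this
    ext k
    rw [Finset.mem_inf]
    simp only [Finset.mem_sdiff, Finset.mem_compl, Finset.mem_biUnion, Finset.mem_filter,
      Finset.mem_univ, true_and, hP, Finset.subset_iff, Finset.mem_union]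
    obtain ⟨i0, hi0⟩ := hne
    simp only [Finset.mem_sdiff, Finset.mem_compl] at hi0
    constructor
    · intro h
      refine ⟨fun a ha => ?_, fun hc => ?_⟩
      · by_contra hn
        push Not at hn
        exact (h a hn).2 ha
      · obtain ⟨j, hj, hjk⟩ := (h i0 hi0).1
        exact hj (hc hjk)
    · rintro ⟨h, h'⟩ i hi
      push Not at h'
      obtain ⟨j, hj, hjI⟩ := h'
      refine ⟨⟨j, hjI, hj⟩, fun hc => ?_⟩
      rcases h hc with h | h
      · exact hi.1 h
      · exact hi.2 h
  simp only [hset]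
  convert key using 1
  funext K
  apply Finset.sum_congr rfl
  intro ω _
  simp only [hw]
  congr!
end

section
/- Let integers $M\ge 0$, $Q\ge 1$, $0\le R\le M$, $N=(M+1)(Q+1)-R$, $P=N-M-1$, and let real numbers $k_1\ge k_2\ge\dots\ge k_{N-M}$ be given. Define $\tilde r=\tfrac1P\sum_{i=1}^{Q}k_i+\tfrac{P-Q+1}{P}k_{Q+1}$ and $\tilde r_i=\tilde r-k_i$ for $1\le i\le Q$, $\tilde r_i=\tilde r-k_{Q+1}$ for $Q<i\le N$. Then $(\tilde r_1,\dots,\tilde r_N)$ satisfies every constraint of LP(9): for every $j\in[N-M]$ and every $\mathcal N\subseteq[N]\setminus\{j\}$ with $|\mathcal N|=P$ and $\{1,\dots,j-1\}\subseteq\mathcal N$, one has $\sum_{i\in\mathcal N}\tilde r_i\ge k_j$. -/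
/-- Lemma 3 of the paper, feasibility for LP(9): with integers `M ≥ 0`,
`Q ≥ 1`, `0 ≤ R ≤ M`, `N = (M+1)(Q+1) - R`, `P = N - M - 1`, reals
`k 1 ≥ k 2 ≥ … ≥ k (N-M)`, `r̃ = (1/P) ∑_{i=1}^{Q} k i + ((P-Q+1)/P) k (Q+1)`, and
`r̃ i = r̃ - k i` for `1 ≤ i ≤ Q`, `r̃ i = r̃ - k (Q+1)` for `Q < i ≤ N`, the vector
`(r̃ 1, …, r̃ N)` satisfies every constraint of LP(9): for every `j ∈ [N-M]` and every
`𝒩 ⊆ [N] \ {j}` with `|𝒩| = P` and `{1,…,j-1} ⊆ 𝒩`, one has `∑_{i ∈ 𝒩} r̃ i ≥ k j`. -/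
theorem stmt_6 (M Q R N P : ℕ) (hQ : 1 ≤ Q) (hR : R ≤ M)
    (hN : N + R = (M + 1) * (Q + 1)) (hP : P + (M + 1) = N)
    (k : ℕ → ℝ) (hk : ∀ i j, 1 ≤ i → i ≤ j → j ≤ N - M → k j ≤ k i)
    (rb : ℝ)
    (hrb : rb = (∑ i ∈ Finset.Icc 1 Q, k i) / P + ((P : ℝ) - Q + 1) / P * k (Q + 1))
    (rt : ℕ → ℝ) (hrt1 : ∀ i, 1 ≤ i → i ≤ Q → rt i = rb - k i)
    (hrt2 : ∀ i, Q < i → i ≤ N → rt i = rb - k (Q + 1)) :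
    ∀ j, 1 ≤ j → j ≤ N - M → ∀ 𝒩 : Finset ℕ,
      𝒩 ⊆ (Finset.Icc 1 N).erase j → 𝒩.card = P → Finset.Icc 1 (j - 1) ⊆ 𝒩 →
      k j ≤ ∑ i ∈ 𝒩, rt i := by
  have hPQ : Q ≤ P := by
    obtain ⟨q, rfl⟩ : ∃ q, Q = q + 1 := ⟨Q - 1, by omega⟩
    have : 0 ≤ M * q := Nat.zero_le _
    nlinarith
  have hP0 : (P : ℝ) ≠ 0 := by
    have : P ≠ 0 := by omega
    exact_mod_cast this
  intro j hj1 hj2 S hS hcard _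
  set K := k (Q + 1) with hK
  let d : ℕ → ℝ := fun i => if i ≤ Q then k i - K else 0
  have hd0 : ∀ i, 1 ≤ i → 0 ≤ d i := by
    intro i hi
    by_cases h : i ≤ Q
    · have := hk i (Q + 1) hi (by omega) (by omega)
      simp only [d, if_pos h]
      linarith
    · simp only [d, if_neg h]
      exact le_refl _
  have hjS : j ∉ S := fun h => by simpa using hS h
  have hSN : S ⊆ Finset.Icc 1 N := fun i hi => Finset.mem_of_mem_erase (hS hi)
  have hrt : ∀ i ∈ S, rt i = (rb - K) - d i := by
    intro i hi
    have h := Finset.mem_Icc.1 (hSN hi)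
    by_cases hq : i ≤ Q
    · rw [hrt1 i h.1 hq]
      simp only [d, if_pos hq]
      ring
    · rw [hrt2 i (by omega) h.2]
      simp only [d, if_neg hq]
      ring
  have hsum : ∑ i ∈ S, rt i = P * (rb - K) - ∑ i ∈ S, d i := by
    rw [Finset.sum_congr rfl hrt, Finset.sum_sub_distrib, Finset.sum_const, hcard, nsmul_eq_mul]
  have hle : ∑ i ∈ insert j S, d i ≤ ∑ i ∈ Finset.Icc 1 N, d i := by
    apply Finset.sum_le_sum_of_subset_of_nonneg
    · apply Finset.insert_subset _ hSN
      exact Finset.mem_Icc.2 ⟨hj1, by omega⟩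
    · intro i hi _
      exact hd0 i (Finset.mem_Icc.1 hi).1
  rw [Finset.sum_insert hjS] at hle
  have hD : ∑ i ∈ Finset.Icc 1 N, d i = ∑ i ∈ Finset.Icc 1 Q, k i - Q * K := by
    have h1 : ∑ i ∈ Finset.Icc 1 Q, d i = ∑ i ∈ Finset.Icc 1 N, d i := by
      apply Finset.sum_subset (Finset.Icc_subset_Icc_right (by omega))
      intro i hi hi2
      rw [Finset.mem_Icc] at hi hi2
      simp only [d]
      rw [if_neg (by omega)]
    have h2 : ∀ i ∈ Finset.Icc 1 Q, d i = k i - K := by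
      intro i hi
      simp only [d, if_pos (Finset.mem_Icc.1 hi).2]
    rw [← h1, Finset.sum_congr rfl h2, Finset.sum_sub_distrib]
    simp
  have hPr : P * rb = ∑ i ∈ Finset.Icc 1 Q, k i + ((P : ℝ) - Q + 1) * K := by
    rw [hrb]
    field_simp
  have hkj : k j ≤ K + d j := by
    by_cases h : j ≤ Q
    · simp only [d, if_pos h]
      linarith
    · have := hk (Q + 1) j (by omega) (by omega) hj2
      simp only [d, if_neg h]
      linarith
  rw [hsum]
  linarith
end

section
/- Let integers $M\ge 0$, $Q\ge 1$, $0\le R\le M$, $N=(M+1)(Q+1)-R$, $P=N-M-1\ge 1$. Then there exists a family $\mathbb S$ of $N$ subsets of $[N]$ (counted with multiplicity), partitioned into sub-families $\mathbb S^{(1)},\dots,\mathbb S^{(Q+1)}$ with $|\mathbb S^{(j)}|=M+1$ for $1\le j\le Q$ and $|\mathbb S^{(Q+1)}|=M-R+1$, such that: (i) every $\mathcal N\in\mathbb S^{(j)}$ satisfies $|\mathcal N|=P$, $j\notin\mathcal N$ and $\{1,\dots,j-1\}\subseteq\mathcal N$; and (ii) every $i\in[N]$ belongs to exactly $P$ of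 the members of $\mathbb S$ (counted with multiplicity). -/
/-- complement sets -/
def cmpl (a N s : ℕ) : Finset ℕ := (Finset.range a).image (fun k => (s + k * N) / a + 1)

theorem cmpl_card (a N s : ℕ) (ha : 0 < a) (h : a ≤ N) : (cmpl a N s).card = a := by
  unfold cmpl
  rw [Finset.card_image_of_injective, Finset.card_range]
  have hm : StrictMono (fun k => (s + k * N) / a + 1) := by
    apply strictMono_nat_of_lt_succ
    intro k
    have h1 : (s + k * N) / a + 1 = (s + k * N + a) / a := (Nat.add_div_right _ ha).symm
    have h2 : (s + k * N + a) / a ≤ (s + (k + 1) * N) / a := by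
      apply Nat.div_le_div_right
      rw [Nat.add_mul]
      omega
    show (s + k * N) / a + 1 < (s + (k + 1) * N) / a + 1
    omega
  exact hm.injective

theorem cmpl_sub (a N s : ℕ) (ha : 0 < a) (hs : s < N) : cmpl a N s ⊆ Finset.Icc 1 N := by
  intro x hx
  simp only [cmpl, Finset.mem_image, Finset.mem_range] at hx
  obtain ⟨k, hk, rfl⟩ := hx
  have : (s + k * N) / a < N := by
    rw [Nat.div_lt_iff_lt_mul ha]
    have : (k + 1) * N ≤ a * N := Nat.mul_le_mul_right _ hk
    rw [Nat.add_mul] at this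
    rw [Nat.mul_comm N a]
    omega
  exact Finset.mem_Icc.mpr ⟨Nat.le_add_left _ _, this⟩

theorem cmpl_min (a N s x : ℕ) (hx : x ∈ cmpl a N s) : s / a + 1 ≤ x := by
  simp only [cmpl, Finset.mem_image, Finset.mem_range] at hx
  obtain ⟨k, hk, rfl⟩ := hx
  have : s / a ≤ (s + k * N) / a := Nat.div_le_div_right (by omega)
  omega

theorem cmpl_mem (a N s : ℕ) (ha : 0 < a) : s / a + 1 ∈ cmpl a N s := by
  simp only [cmpl, Finset.mem_image, Finset.mem_range]
  exact ⟨0, ha, by simp⟩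

theorem cmpl_count (a N i : ℕ) (ha : 0 < a) (h : a ≤ N) (hi : i < N) :
    ((Finset.range N).filter (fun s => i + 1 ∈ cmpl a N s)).card = a := by
  have hN : 0 < N := by omega
  have : (Finset.range N).filter (fun s => i + 1 ∈ cmpl a N s)
      = (Finset.range a).image (fun r => (i * a + r) % N) := by
    ext s
    simp only [cmpl, Finset.mem_filter, Finset.mem_image, Finset.mem_range]
    constructor
    · rintro ⟨hs, k, hk, hki⟩
      refine ⟨(s + k * N) % a, Nat.mod_lt _ ha, ?_⟩
      have h1 : (s + k * N) / a = i := by omega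
      rw [← h1, Nat.mul_comm, Nat.div_add_mod, Nat.add_mul_mod_self_right, Nat.mod_eq_of_lt hs]
    · rintro ⟨r, hr, rfl⟩
      refine ⟨Nat.mod_lt _ hN, (i * a + r) / N, ?_, ?_⟩
      · rw [Nat.div_lt_iff_lt_mul hN]
        have : (i + 1) * a ≤ N * a := Nat.mul_le_mul_right _ hi
        rw [Nat.add_mul] at this
        rw [Nat.mul_comm a N]
        omega
      · rw [Nat.mul_comm ((i * a + r) / N), Nat.mod_add_div, Nat.mul_comm, Nat.mul_add_div ha,
          Nat.div_eq_of_lt hr]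
  rw [this, Finset.card_image_of_injOn, Finset.card_range]
  intro r hr r' hr' he
  simp only [Finset.coe_range, Set.mem_Iio] at hr hr'
  have he' : i * a + r ≡ i * a + r' [MOD N] := he
  have := Nat.ModEq.add_left_cancel' _ he'
  exact Nat.ModEq.eq_of_lt_of_lt this (by omega) (by omega)

/-- the set-system construction underlying the dual certificate in
Lemma 4 of the paper: for integers `M ≥ 0`, `Q ≥ 1`, `0 ≤ R ≤ M`,
`N = (M+1)(Q+1) - R`, `P = N - M - 1 ≥ 1`, there is a family `𝕊` of `N` subsets of
`[N]` (counted with multiplicity), partitioned into sub-families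
`𝕊⁽¹⁾, …, 𝕊⁽Q+1⁾` with `|𝕊⁽ʲ⁾| = M+1` for `1 ≤ j ≤ Q` and `|𝕊⁽Q+1⁾| = M - R + 1`,
such that every `𝒩 ∈ 𝕊⁽ʲ⁾` satisfies `𝒩 ⊆ [N]`, `|𝒩| = P`, `j ∉ 𝒩`,
`{1,…,j-1} ⊆ 𝒩`, and every `i ∈ [N]` belongs to exactly `P` members of `𝕊`
(counted with multiplicity). -/
theorem stmt_7 (M Q R N P : ℕ) (hQ : 1 ≤ Q) (hR : R ≤ M)
    (hN : N + R = (M + 1) * (Q + 1)) (hP : P + (M + 1) = N) (hP1 : 1 ≤ P) :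
    ∃ S : ℕ → Multiset (Finset ℕ),
      (∀ j, 1 ≤ j → j ≤ Q → Multiset.card (S j) = M + 1) ∧
      (Multiset.card (S (Q + 1)) + R = M + 1) ∧
      (∀ j, 1 ≤ j → j ≤ Q + 1 → ∀ 𝒩 ∈ S j,
        𝒩 ⊆ Finset.Icc 1 N ∧ 𝒩.card = P ∧ j ∉ 𝒩 ∧ Finset.Icc 1 (j - 1) ⊆ 𝒩) ∧
      (∀ i, 1 ≤ i → i ≤ N →
        (∑ j ∈ Finset.Icc 1 (Q + 1),
          Multiset.card ((S j).filter (fun 𝒩 => i ∈ 𝒩))) = P) := by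
  have ha : 0 < M + 1 := by omega
  have haN : M + 1 ≤ N := by omega
  refine ⟨fun j => ((Finset.range N).filter (fun s => s / (M + 1) + 1 = j)).val.map
    (fun s => Finset.Icc 1 N \ cmpl (M + 1) N s), ?_, ?_, ?_, ?_⟩
  · intro j hj hjQ
    rw [Multiset.card_map, Finset.card_val]
    obtain ⟨j, rfl⟩ : ∃ j', j = j' + 1 := ⟨j - 1, by omega⟩
    have : (Finset.range N).filter (fun s => s / (M + 1) + 1 = j + 1)
        = Finset.Ico (j * (M + 1)) (j * (M + 1) + (M + 1)) := by
      ext s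
      simp only [Finset.mem_filter, Finset.mem_range, Finset.mem_Ico, Nat.add_right_cancel_iff]
      rw [Nat.div_eq_iff ha]
      have : (j + 1) * (M + 1) ≤ Q * (M + 1) := Nat.mul_le_mul_right _ hjQ
      have h2 : (M + 1) * (Q + 1) = Q * (M + 1) + (M + 1) := by ring
      rw [Nat.add_mul, Nat.one_mul] at this
      omega
    rw [this, Nat.card_Ico]
    omega
  · rw [Multiset.card_map, Finset.card_val]
    have h2 : (M + 1) * (Q + 1) = Q * (M + 1) + (M + 1) := by ring
    have : (Finset.range N).filter (fun s => s / (M + 1) + 1 = Q + 1)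
        = Finset.Ico (Q * (M + 1)) N := by
      ext s
      simp only [Finset.mem_filter, Finset.mem_range, Finset.mem_Ico, Nat.add_right_cancel_iff]
      rw [Nat.div_eq_iff ha]
      omega
    rw [this, Nat.card_Ico]
    omega
  · intro j hj hjQ 𝒩 hm
    simp only [Multiset.mem_map, Finset.mem_val, Finset.mem_filter, Finset.mem_range] at hm
    obtain ⟨s, ⟨hs, rfl⟩, rfl⟩ := hm
    have hsub := cmpl_sub (M + 1) N s ha hs
    refine ⟨Finset.sdiff_subset, ?_, ?_, ?_⟩
    · rw [Finset.card_sdiff_of_subset hsub, cmpl_card _ _ _ ha haN, Nat.card_Icc]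
      omega
    · intro hc
      exact (Finset.mem_sdiff.mp hc).2 (cmpl_mem _ _ _ ha)
    · intro x hx
      have h1 := Finset.mem_Icc.mp (hsub (cmpl_mem (M + 1) N s ha))
      rw [Finset.mem_Icc] at hx
      rw [Finset.mem_sdiff, Finset.mem_Icc]
      refine ⟨by omega, fun hc => ?_⟩
      have := cmpl_min _ _ _ _ hc
      omega
  · intro i hi hiN
    obtain ⟨i, rfl⟩ : ∃ i', i = i' + 1 := ⟨i - 1, by omega⟩
    have hcount := cmpl_count (M + 1) N i ha haN (by omega)
    have hsplit := Finset.card_filter_add_card_filter_not (s := Finset.range N)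
      (fun s => i + 1 ∈ cmpl (M + 1) N s)
    rw [Finset.card_range, hcount] at hsplit
    have hfib := Finset.card_eq_sum_card_fiberwise
      (s := (Finset.range N).filter (fun s => ¬ i + 1 ∈ cmpl (M + 1) N s))
      (t := Finset.Icc 1 (Q + 1)) (f := fun s => s / (M + 1) + 1) (by
        intro s hs
        simp only [Finset.coe_filter, Finset.mem_range, Set.mem_ofPred_eq] at hs
        have : s / (M + 1) < Q + 1 := by
          rw [Nat.div_lt_iff_lt_mul ha, Nat.mul_comm]
          omega
        simp only [Finset.coe_Icc, Set.mem_Icc]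
        exact ⟨Nat.le_add_left _ _, this⟩)
    have hsum : (∑ j ∈ Finset.Icc 1 (Q + 1), Multiset.card
        ((((Finset.range N).filter (fun s => s / (M + 1) + 1 = j)).val.map
          (fun s => Finset.Icc 1 N \ cmpl (M + 1) N s)).filter (fun 𝒩 => i + 1 ∈ 𝒩)))
        = ((Finset.range N).filter (fun s => ¬ i + 1 ∈ cmpl (M + 1) N s)).card := by
      rw [hfib]
      refine Finset.sum_congr rfl fun j _ => ?_
      rw [Multiset.filter_map, Multiset.card_map, ← Finset.filter_val, Finset.card_val,
        Finset.filter_filter, Finset.filter_filter]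
      congr 1
      ext s
      simp only [Finset.mem_filter, Function.comp, Finset.mem_sdiff, Finset.mem_Icc]
      constructor
      · rintro ⟨h1, h2, h3, h4⟩
        exact ⟨h1, h4, h2⟩
      · rintro ⟨h1, h2, h3⟩
        exact ⟨h1, h3, ⟨hi, hiN⟩, h2⟩
    refine hsum.trans ?_
    omega
end

section
/- Let integers $M\ge 0$, $Q\ge 1$, $0\le R\le M$, $N=(M+1)(Q+1)-R$, $P=N-M-1\ge 1$, and let reals $k_1,\dots,k_{N-M}$ be given. If $(r_1,\dots,r_N)\in\mathbb R^N$ satisfies $\sum_{i\in\mathcal N} r_i\ge k_j$ for every $j\in[N-M]$ and every $\mathcal N\subseteq[N]\setminus\{j\}$ with $|\mathcal N|=P$ and $\{1,\dots,j-1\}\subseteq\mathcal N$, then $\sum_{i=1}^N r_i\ \ge\ \sum_{j=1}^{Q}\tfrac{M+1}{P}\,k_j+\tfrac{M-R+1}{P}\,k_{Q+1}$. -/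
theorem avg_aux (f : ℕ → ℝ) (m : ℕ) (c : ℝ) (n : ℕ) : ∀ S : Finset ℕ, S.card = m + n →
    (∀ A : Finset ℕ, A ⊆ S → A.card = m → ∑ i ∈ A, f i ≤ c) →
    (m : ℝ) * ∑ i ∈ S, f i ≤ (m + n : ℕ) * c := by
  induction n with
  | zero =>
    intro S hS h
    have := h S (Finset.Subset.refl _) hS
    simpa using mul_le_mul_of_nonneg_left this (Nat.cast_nonneg m)
  | succ n ih =>
    intro S hS h
    rcases Nat.eq_zero_or_pos m with hm | hm
    · subst hm
      have := h ∅ (by simp) (by simp)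
      simp only [Finset.sum_empty] at this
      simp only [Nat.cast_zero, zero_mul]
      positivity
    · have h1 : ∀ s ∈ S, (m : ℝ) * ((∑ i ∈ S, f i) - f s) ≤ (m + n : ℕ) * c := by
        intro s hs
        have h2 := ih (S.erase s) (by rw [Finset.card_erase_of_mem hs]; omega)
          (fun A hA hc => h A (hA.trans (Finset.erase_subset _ _)) hc)
        have h3 := Finset.add_sum_erase S f hs
        have h4 : (∑ i ∈ S, f i) - f s = ∑ i ∈ S.erase s, f i := by linarith
        rw [h4]; exact h2
      have h5 := Finset.sum_le_sum h1
      rw [← Finset.mul_sum, Finset.sum_sub_distrib, Finset.sum_const, Finset.sum_const, hS] at h5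
      simp only [nsmul_eq_mul] at h5
      have hp : (0 : ℝ) < ((m + n : ℕ) : ℝ) := by exact_mod_cast (by omega)
      refine le_of_mul_le_mul_left ?_ hp
      push_cast at h5 ⊢
      linarith

theorem avg_bound (f : ℕ → ℝ) (m : ℕ) (c : ℝ) (S : Finset ℕ) (hS : m ≤ S.card)
    (h : ∀ A : Finset ℕ, A ⊆ S → A.card = m → ∑ i ∈ A, f i ≤ c) :
    (m : ℝ) * ((∑ i ∈ S, f i) / S.card) ≤ c := by
  rcases Nat.eq_zero_or_pos S.card with h0 | h0
  · have hm : m = 0 := by omega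
    subst hm
    have := h ∅ (by simp) (by simp)
    simpa using this
  · obtain ⟨n, hn⟩ := Nat.exists_eq_add_of_le hS
    have := avg_aux f m c n S hn h
    rw [← hn] at this
    have hp : (0 : ℝ) < (S.card : ℝ) := by exact_mod_cast h0
    rw [← mul_div_assoc, div_le_iff₀ hp]
    linarith

/-- the dual lower bound in Lemma 4 of the paper: for integers `M ≥ 0`,
`Q ≥ 1`, `0 ≤ R ≤ M`, `N = (M+1)(Q+1) - R`, `P = N - M - 1 ≥ 1`, and reals
`k 1, …, k (N-M)`: if `(r 1, …, r N)` satisfies `∑_{i ∈ 𝒩} r i ≥ k j` for every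
`j ∈ [N-M]` and every `𝒩 ⊆ [N] \ {j}` with `|𝒩| = P` and `{1,…,j-1} ⊆ 𝒩`, then
`∑_{i=1}^{N} r i ≥ ∑_{j=1}^{Q} ((M+1)/P) k j + ((M-R+1)/P) k (Q+1)`. -/
theorem stmt_8 (M Q R N P : ℕ) (hQ : 1 ≤ Q) (hR : R ≤ M)
    (hN : N + R = (M + 1) * (Q + 1)) (hP : P + (M + 1) = N) (hP1 : 1 ≤ P)
    (k : ℕ → ℝ) (r : ℕ → ℝ)
    (hfeas : ∀ j, 1 ≤ j → j ≤ N - M → ∀ 𝒩 : Finset ℕ,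
      𝒩 ⊆ (Finset.Icc 1 N).erase j → 𝒩.card = P → Finset.Icc 1 (j - 1) ⊆ 𝒩 →
      k j ≤ ∑ i ∈ 𝒩, r i) :
    (∑ j ∈ Finset.Icc 1 Q, ((M : ℝ) + 1) / P * k j) + ((M : ℝ) - R + 1) / P * k (Q + 1)
      ≤ ∑ i ∈ Finset.Icc 1 N, r i := by
  have hQN : Q + 1 + M ≤ N := by nlinarith
  set S := ∑ i ∈ Finset.Icc 1 N, r i with hSdef
  have H : ∀ j, 1 ≤ j → j ≤ Q + 1 → ∀ C : Finset ℕ, C ⊆ Finset.Icc (j + 1) N → C.card = M →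
      ∑ i ∈ C, r i ≤ S - k j - r j := by
    intro j hj1 hj2 C hC hcard
    have hjC : j ∉ C := fun hh => by
      have := Finset.mem_Icc.1 (hC hh); omega
    have hsub : insert j C ⊆ Finset.Icc 1 N := by
      intro x hx
      rcases Finset.mem_insert.1 hx with rfl | hx
      · rw [Finset.mem_Icc]; omega
      · have := Finset.mem_Icc.1 (hC hx)
        rw [Finset.mem_Icc]; omega
    have h1 := hfeas j hj1 (by omega) (Finset.Icc 1 N \ insert j C)
      (by
        intro x hx
        simp only [Finset.mem_sdiff, Finset.mem_insert, not_or] at hx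
        exact Finset.mem_erase.2 ⟨hx.2.1, hx.1⟩)
      (by
        rw [Finset.card_sdiff_of_subset hsub, Finset.card_insert_of_notMem hjC, hcard,
          Nat.card_Icc]
        omega)
      (by
        intro x hx
        rw [Finset.mem_Icc] at hx
        simp only [Finset.mem_sdiff, Finset.mem_insert, not_or, Finset.mem_Icc]
        refine ⟨by omega, by omega, fun hh => ?_⟩
        have := Finset.mem_Icc.1 (hC hh); omega)
    have h2 := Finset.sum_sdiff (f := r) hsub
    rw [Finset.sum_insert hjC] at h2
    linarith
  set U := Finset.Icc (Q + 2) N with hU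
  have hUc : U.card + Q + 1 = N := by rw [hU, Nat.card_Icc]; omega
  have hMU : M ≤ U.card := by omega
  set m := (∑ i ∈ U, r i) / U.card with hm
  have hσ : ∑ i ∈ U, r i = U.card * m := by
    rcases Nat.eq_zero_or_pos U.card with h0 | h0
    · rw [Finset.card_eq_zero.1 h0]; simp
    · have hp : (U.card : ℝ) ≠ 0 := by exact_mod_cast h0.ne'
      rw [hm]; field_simp
  have hUsub : ∀ j, j ≤ Q + 1 → U ⊆ Finset.Icc (j + 1) N := by
    intro j hj x hx
    rw [hU, Finset.mem_Icc] at hx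
    rw [Finset.mem_Icc]; omega
  have e1 : ∀ j, 1 ≤ j → j ≤ Q + 1 → (M : ℝ) * m ≤ S - k j - r j := fun j h1 h2 =>
    avg_bound r M _ U hMU (fun A hA hc => H j h1 h2 A (hA.trans (hUsub j h2)) hc)
  have e2 : ∀ j, 1 ≤ j → j ≤ Q → 1 ≤ M →
      ((M : ℝ) - 1) * m ≤ S - k j - r j - r (Q + 1) := by
    intro j h1 h2 h3
    have := avg_bound r (M - 1) (S - k j - r j - r (Q + 1)) U (by omega) (by
      intro A hA hc
      have hn : Q + 1 ∉ A := fun hh => by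
        have := Finset.mem_Icc.1 (hA hh); omega
      have := H j h1 (by omega) (insert (Q + 1) A)
        (Finset.insert_subset (Finset.mem_Icc.2 (by omega)) (hA.trans (hUsub j (by omega))))
        (by rw [Finset.card_insert_of_notMem hn]; omega)
      rw [Finset.sum_insert hn] at this
      linarith)
    rwa [Nat.cast_sub h3, Nat.cast_one] at this
  have hQ0 : (0 : ℝ) < Q := by exact_mod_cast hQ
  have hRM : (R : ℝ) ≤ M := by exact_mod_cast hR
  have hR0 : (0 : ℝ) ≤ R := Nat.cast_nonneg R
  have hQ1 : (1 : ℝ) ≤ Q := by exact_mod_cast hQ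
  have e3 : ∀ j ∈ Finset.Icc 1 Q, (((M : ℝ) + 1) * Q * M - R) * m
      ≤ ((M : ℝ) + 1) * Q * (S - k j - r j) - R * r (Q + 1) := by
    intro j hj
    rw [Finset.mem_Icc] at hj
    have a1 := e1 j hj.1 (by omega)
    rcases Nat.eq_zero_or_pos R with h0 | h0
    · subst h0
      have := mul_le_mul_of_nonneg_left a1 (by positivity : (0 : ℝ) ≤ ((M : ℝ) + 1) * Q)
      simp only [Nat.cast_zero]
      linarith
    · have a2 := e2 j hj.1 hj.2 (by omega)
      have b1 := mul_le_mul_of_nonneg_left a1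
        (by nlinarith : (0 : ℝ) ≤ ((M : ℝ) + 1) * Q - R)
      have b2 := mul_le_mul_of_nonneg_left a2 hR0
      linarith
  have e4 := Finset.sum_le_sum e3
  simp only [← Finset.mul_sum, Finset.sum_sub_distrib, Finset.sum_const, Nat.card_Icc, nsmul_eq_mul,
    Nat.add_sub_cancel] at e4
  have e5 := e1 (Q + 1) (by omega) le_rfl
  have e6 := mul_le_mul_of_nonneg_left e5 (by linarith : (0 : ℝ) ≤ (M : ℝ) + 1 - R)
  have hsplit : S = ∑ j ∈ Finset.Icc 1 Q, r j + r (Q + 1) + U.card * m := by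
    rw [← hσ, ← Finset.sum_Icc_succ_top (by omega), hSdef, hU]
    have hd : Disjoint (Finset.Icc 1 (Q + 1)) (Finset.Icc (Q + 2) N) := by
      rw [Finset.disjoint_left]
      intro x hx hy
      rw [Finset.mem_Icc] at hx hy
      omega
    rw [← Finset.sum_union hd]
    congr 1
    ext x
    simp only [Finset.mem_union, Finset.mem_Icc]
    omega
  rw [← Finset.mul_sum]
  set K := ∑ j ∈ Finset.Icc 1 Q, k j
  set ρ := ∑ j ∈ Finset.Icc 1 Q, r j
  have e7 : (((M : ℝ) + 1) * Q * M - R) * m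
      ≤ ((M : ℝ) + 1) * (Q * S - K - ρ) - R * r (Q + 1) := by
    refine le_of_mul_le_mul_left ?_ hQ0
    linarith
  have hp : (0 : ℝ) < P := by exact_mod_cast hP1
  have c1 : (U.card : ℝ) + Q + 1 = N := by exact_mod_cast hUc
  have c2 : (N : ℝ) + R = (M + 1) * (Q + 1) := by exact_mod_cast hN
  have c3 : (P : ℝ) + (M + 1) = N := by exact_mod_cast hP
  have c4 : (U.card : ℝ) = M * Q + M - R := by linarith
  have c5 : (P : ℝ) = (M + 1) * Q - R := by linarith
  rw [c4] at hsplit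
  have key : ((M : ℝ) + 1) * K + ((M : ℝ) - R + 1) * k (Q + 1) ≤ P * S := by
    rw [c5]
    have := congrArg (fun x => ((M : ℝ) + 1) * x) hsplit
    linarith
  rw [div_mul_eq_mul_div, div_mul_eq_mul_div, ← add_div, div_le_iff₀ hp]
  linarith
end

section
/- Let integers $M\ge 0$, $Q\ge 1$, $0\le R\le M$, $N=(M+1)(Q+1)-R$, $P=N-M-1\ge 1$, and let reals $k_1\ge k_2\ge\dots\ge k_{N-M}$ be given. Define $\tilde r=\tfrac1P\sum_{i=1}^{Q}k_i+\tfrac{P-Q+1}{P}k_{Q+1}$ and $\tilde r_i=\tilde r-k_i$ for $1\le i\le Q$, $\tilde r_i=\tilde r-k_{Q+1}$ for $Q<i\le N$. Then $(\tilde r_1,\dots,\tilde r_N)$ is an optimal solution of LP(9): it satisfies all the constraints of LP(9), its value satisfies $\sum_{i=1}^{N}\tilde r_i=\sum_{i=1}^{Q}\tfrac{N-P}{P}k_i+\tfrac{N+Q(P-N)}{P}k_{Q+1}$, and every $(r_1,\dots,r_N)$ satisfying the constraints of LP(9) has $\sum_{i=1}^N r_i\ge\sum_{i=1}^N\tilde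 r_i$. -/
lemma avg_subset (f : ℕ → ℝ) (m d : ℕ) : ∀ T : Finset ℕ, T.card = m + d →
    ∃ B, B ⊆ T ∧ B.card = m ∧ (m : ℝ) * ∑ i ∈ T, f i ≤ ((m : ℝ) + d) * ∑ i ∈ B, f i := by
  induction d with
  | zero => intro T hT; exact ⟨T, subset_rfl, by simpa using hT, by simp⟩
  | succ d ih =>
    intro T hT
    have hne : T.Nonempty := by rw [← Finset.card_pos]; omega
    obtain ⟨a, ha, hmin⟩ := T.exists_min_image f hne
    have hc : (T.erase a).card = m + d := by rw [Finset.card_erase_of_mem ha]; omega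
    obtain ⟨B, hB, hBc, hBs⟩ := ih _ hc
    refine ⟨B, hB.trans (Finset.erase_subset _ _), hBc, ?_⟩
    have hsum := Finset.add_sum_erase T f ha
    have h1 : ((m : ℝ) + d) * f a ≤ ∑ i ∈ T.erase a, f i := by
      have := Finset.card_nsmul_le_sum (T.erase a) f (f a)
        (fun x hx => hmin x (Finset.mem_of_mem_erase hx))
      rw [hc, nsmul_eq_mul] at this
      push_cast at this
      exact this
    rcases Nat.eq_zero_or_pos (m + d) with h0 | h0
    · have : m = 0 := by omega
      subst this
      rw [Finset.card_eq_zero] at hBc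
      simp [hBc]
    · have hp : (0 : ℝ) < (m : ℝ) + d := by exact_mod_cast h0
      have hm : (0 : ℝ) ≤ m := Nat.cast_nonneg m
      rw [← hsum]
      push_cast
      have h2 := mul_le_mul_of_nonneg_left h1 hm
      have h3 : (m : ℝ) * f a ≤ ∑ i ∈ B, f i := by
        refine le_of_mul_le_mul_left ?_ hp
        nlinarith
      nlinarith

lemma avg_subset' (f : ℕ → ℝ) (m : ℕ) (T : Finset ℕ) (s : ℝ) (hm : m ≤ T.card)
    (hs : (T.card : ℝ) * s = ∑ i ∈ T, f i) :
    ∃ B, B ⊆ T ∧ B.card = m ∧ (m : ℝ) * s ≤ ∑ i ∈ B, f i := by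
  obtain ⟨d, hd⟩ := Nat.exists_eq_add_of_le hm
  obtain ⟨B, h1, h2, h3⟩ := avg_subset f m d T hd
  refine ⟨B, h1, h2, ?_⟩
  rcases Nat.eq_zero_or_pos (m + d) with h0 | h0
  · have : m = 0 := by omega
    subst this
    rw [Finset.card_eq_zero] at h2
    simp [h2]
  · have hp : (0 : ℝ) < (m : ℝ) + d := by exact_mod_cast h0
    refine le_of_mul_le_mul_left ?_ hp
    rw [← hs, hd] at h3
    push_cast at h3
    nlinarith

/-- Lemma 1 of the paper, the closed-form exact solution of the
over-constrained LP(9): for integers `M ≥ 0`, `Q ≥ 1`, `0 ≤ R ≤ M`,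
`N = (M+1)(Q+1) - R`, `P = N - M - 1 ≥ 1`, reals `k 1 ≥ … ≥ k (N-M)`,
`r̃ = (1/P) ∑_{i=1}^{Q} k i + ((P-Q+1)/P) k (Q+1)`, `r̃ i = r̃ - k i` for `1 ≤ i ≤ Q`
and `r̃ i = r̃ - k (Q+1)` for `Q < i ≤ N`: the vector `(r̃ 1, …, r̃ N)` satisfies all
the constraints of LP(9), its value is
`∑_{i=1}^{N} r̃ i = ∑_{i=1}^{Q} ((N-P)/P) k i + ((N + Q(P-N))/P) k (Q+1)`,
and every `(r 1, …, r N)` satisfying the constraints of LP(9) has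
`∑_{i=1}^{N} r i ≥ ∑_{i=1}^{N} r̃ i`. -/
theorem stmt_9 (M Q R N P : ℕ) (hQ : 1 ≤ Q) (hR : R ≤ M)
    (hN : N + R = (M + 1) * (Q + 1)) (hP : P + (M + 1) = N) (hP1 : 1 ≤ P)
    (k : ℕ → ℝ) (hk : ∀ i j, 1 ≤ i → i ≤ j → j ≤ N - M → k j ≤ k i)
    (rb : ℝ)
    (hrb : rb = (∑ i ∈ Finset.Icc 1 Q, k i) / P + ((P : ℝ) - Q + 1) / P * k (Q + 1))
    (rt : ℕ → ℝ) (hrt1 : ∀ i, 1 ≤ i → i ≤ Q → rt i = rb - k i)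
    (hrt2 : ∀ i, Q < i → i ≤ N → rt i = rb - k (Q + 1)) :
    (∀ j, 1 ≤ j → j ≤ N - M → ∀ 𝒩 : Finset ℕ,
      𝒩 ⊆ (Finset.Icc 1 N).erase j → 𝒩.card = P → Finset.Icc 1 (j - 1) ⊆ 𝒩 →
      k j ≤ ∑ i ∈ 𝒩, rt i) ∧
    (∑ i ∈ Finset.Icc 1 N, rt i
      = (∑ i ∈ Finset.Icc 1 Q, ((N : ℝ) - P) / P * k i)
        + ((N : ℝ) + Q * ((P : ℝ) - N)) / P * k (Q + 1)) ∧
    (∀ r : ℕ → ℝ,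
      (∀ j, 1 ≤ j → j ≤ N - M → ∀ 𝒩 : Finset ℕ,
        𝒩 ⊆ (Finset.Icc 1 N).erase j → 𝒩.card = P → Finset.Icc 1 (j - 1) ⊆ 𝒩 →
        k j ≤ ∑ i ∈ 𝒩, r i) →
      ∑ i ∈ Finset.Icc 1 N, rt i ≤ ∑ i ∈ Finset.Icc 1 N, r i) := by
  have hNR : (N : ℝ) + R = (M + 1) * (Q + 1) := by exact_mod_cast hN
  have hPR : (P : ℝ) + (M + 1) = N := by exact_mod_cast hP
  have hP0 : (0 : ℝ) < P := by exact_mod_cast hP1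
  have hMQ : M ≤ M * Q := Nat.le_mul_of_pos_right M hQ
  have hexp : (M + 1) * (Q + 1) = M * Q + M + Q + 1 := by ring
  have hPQ : Q ≤ P := by omega
  have hrbP : (P : ℝ) * rb = (∑ i ∈ Finset.Icc 1 Q, k i) + ((P : ℝ) - Q + 1) * k (Q + 1) := by
    rw [hrb]; field_simp
  have hsplit : ∀ f : ℕ → ℝ, ∑ i ∈ Finset.Icc 1 N, f i
      = ∑ i ∈ Finset.Icc 1 Q, f i + ∑ i ∈ Finset.Icc (Q + 1) N, f i := by
    intro f
    rw [← Finset.sum_union]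
    · congr 1; ext x; simp only [Finset.mem_union, Finset.mem_Icc]; omega
    · rw [Finset.disjoint_left]; intro x; simp only [Finset.mem_Icc]; omega
  have hval : ∑ i ∈ Finset.Icc 1 N, rt i
      = (∑ i ∈ Finset.Icc 1 Q, ((N : ℝ) - P) / P * k i)
        + ((N : ℝ) + Q * ((P : ℝ) - N)) / P * k (Q + 1) := by
    have e1 : ∑ i ∈ Finset.Icc 1 Q, rt i = Q * rb - ∑ i ∈ Finset.Icc 1 Q, k i := by
      rw [Finset.sum_congr rfl (fun i hi => hrt1 i (Finset.mem_Icc.1 hi).1 (Finset.mem_Icc.1 hi).2),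
        Finset.sum_sub_distrib]
      simp
    have e2 : ∑ i ∈ Finset.Icc (Q + 1) N, rt i = ((N : ℝ) - Q) * (rb - k (Q + 1)) := by
      rw [Finset.sum_congr rfl (fun i hi => hrt2 i (Finset.mem_Icc.1 hi).1 (Finset.mem_Icc.1 hi).2)]
      rw [Finset.sum_const, Nat.card_Icc, nsmul_eq_mul]
      have : N + 1 - (Q + 1) = N - Q := by omega
      rw [this, Nat.cast_sub (by omega)]
    rw [hsplit, e1, e2, ← Finset.mul_sum, hrb]
    field_simp
    ring
  refine ⟨?_, hval, ?_⟩
  · intro j hj1 hj2 S hS hSc _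
    let K : ℕ → ℝ := fun i => if i ≤ Q then k i else k (Q + 1)
    have hKQ : ∀ i, i ≤ Q → K i = k i := fun i hi => if_pos hi
    have hKQ' : ∀ i, Q < i → K i = k (Q + 1) := fun i hi => if_neg (by omega)
    have hrtK : ∀ i, 1 ≤ i → i ≤ N → rt i = rb - K i := by
      intro i h1 h2
      by_cases h : i ≤ Q
      · rw [hKQ i h, hrt1 i h1 h]
      · rw [hKQ' i (by omega), hrt2 i (by omega) h2]
    have hKj : k j ≤ K j := by
      by_cases h : j ≤ Q
      · rw [hKQ j h]
      · rw [hKQ' j (by omega)]; exact hk _ _ (by omega) (by omega) hj2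
    have hjS : j ∉ S := fun h => by simpa using hS h
    have hmem : ∀ i ∈ S, 1 ≤ i ∧ i ≤ N := fun i hi =>
      Finset.mem_Icc.1 (Finset.mem_of_mem_erase (hS hi))
    have e : ∑ i ∈ S, rt i = P * rb - ∑ i ∈ S, K i := by
      rw [Finset.sum_congr rfl (fun i hi => hrtK i (hmem i hi).1 (hmem i hi).2),
        Finset.sum_sub_distrib]
      simp [hSc]
    have hnn : ∀ i, 1 ≤ i → 0 ≤ K i - k (Q + 1) := by
      intro i h1
      by_cases h : i ≤ Q
      · rw [hKQ i h]; linarith [hk i (Q + 1) h1 (by omega) (by omega)]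
      · rw [hKQ' i (by omega)]; simp
    have key : ∑ i ∈ insert j S, (K i - k (Q + 1)) ≤ ∑ i ∈ Finset.Icc 1 Q, (K i - k (Q + 1)) := by
      have h1 : ∑ i ∈ insert j S, (K i - k (Q + 1))
          = ∑ i ∈ (insert j S).filter (fun i => i ≤ Q), (K i - k (Q + 1)) := by
        rw [Finset.sum_filter]
        refine Finset.sum_congr rfl (fun i _ => ?_)
        split_ifs with h
        · rfl
        · rw [hKQ' i (by omega)]; simp
      rw [h1]
      refine Finset.sum_le_sum_of_subset_of_nonneg ?_ ?_
      · intro x hx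
        rw [Finset.mem_filter, Finset.mem_insert] at hx
        rw [Finset.mem_Icc]
        refine ⟨?_, hx.2⟩
        rcases hx.1 with h | h
        · omega
        · exact (hmem x h).1
      · intro i hi _
        exact hnn i (Finset.mem_Icc.1 hi).1
    rw [Finset.sum_insert hjS, Finset.sum_sub_distrib, Finset.sum_sub_distrib,
      Finset.sum_congr rfl (fun i hi => hKQ i (Finset.mem_Icc.1 hi).2)] at key
    simp only [Finset.sum_const, hSc, Nat.card_Icc, nsmul_eq_mul, Nat.add_sub_cancel] at key
    rw [e, hrbP]
    linarith
  · intro r hr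
    have hcomp : ∀ j, 1 ≤ j → j ≤ Q + 1 → ∀ C : Finset ℕ, j ∈ C → C.card = M + 1 →
        (∀ i ∈ C, j ≤ i ∧ i ≤ N) → k j + ∑ i ∈ C, r i ≤ ∑ i ∈ Finset.Icc 1 N, r i := by
      intro j h1 h2 C hjC hC hmem
      have hsub : C ⊆ Finset.Icc 1 N := by
        intro x hx
        have := hmem x hx
        rw [Finset.mem_Icc]; omega
      have := hr j h1 (by omega) (Finset.Icc 1 N \ C) ?_ ?_ ?_
      · have h3 := Finset.sum_sdiff (f := r) hsub
        linarith
      · intro x hx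
        rw [Finset.mem_sdiff] at hx
        rw [Finset.mem_erase]
        exact ⟨fun h => hx.2 (h ▸ hjC), hx.1⟩
      · rw [Finset.card_sdiff_of_subset hsub, hC, Nat.card_Icc]; omega
      · intro x hx
        rw [Finset.mem_Icc] at hx
        rw [Finset.mem_sdiff, Finset.mem_Icc]
        refine ⟨by omega, fun h => ?_⟩
        have := hmem x h
        omega
    set Tot := ∑ i ∈ Finset.Icc 1 N, r i with hTot
    set T := Finset.Icc (Q + 2) N with hT
    have hTc : T.card = N - Q - 1 := by rw [hT, Nat.card_Icc]; omega
    have hTcR : (T.card : ℝ) = N - Q - 1 := by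
      rw [hTc, Nat.cast_sub (by omega), Nat.cast_sub (by omega)]; simp
    have hMT : M ≤ T.card := by rw [hTc]; omega
    have hTm : ∀ i ∈ T, Q + 2 ≤ i ∧ i ≤ N := fun i hi => Finset.mem_Icc.1 hi
    obtain ⟨s, hs⟩ : ∃ s : ℝ, (T.card : ℝ) * s = ∑ i ∈ T, r i := by
      rcases Nat.eq_zero_or_pos T.card with h | h
      · rw [Finset.card_eq_zero] at h
        exact ⟨0, by simp [h]⟩
      · have : (T.card : ℝ) ≠ 0 := by positivity
        exact ⟨(∑ i ∈ T, r i) / T.card, by field_simp⟩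
    have hTotal : Tot = ∑ i ∈ Finset.Icc 1 Q, r i + r (Q + 1) + (N - Q - 1) * s := by
      rw [← hTcR, hs, hTot, hsplit, hT, add_assoc]
      congr 1
      rw [← Finset.add_sum_Ioc_eq_sum_Icc (by omega : Q + 1 ≤ N)]
      congr 1
      refine Finset.sum_congr ?_ (fun _ _ => rfl)
      ext x; simp only [Finset.mem_Ioc, Finset.mem_Icc]; omega
    have hA : ∀ j, 1 ≤ j → j ≤ Q + 1 → k j + r j + M * s ≤ Tot := by
      intro j h1 h2
      obtain ⟨B, hB, hBc, hBs⟩ := avg_subset' r M T s hMT hs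
      have hjB : j ∉ B := fun h => by have := hTm _ (hB h); omega
      have := hcomp j h1 h2 (insert j B) (Finset.mem_insert_self _ _)
        (by rw [Finset.card_insert_of_notMem hjB, hBc]) ?_
      · rw [Finset.sum_insert hjB] at this; linarith
      · intro i hi
        rcases Finset.mem_insert.1 hi with h | h
        · omega
        · have := hTm _ (hB h); omega
    have hBB : 1 ≤ M → ∀ j, 1 ≤ j → j ≤ Q → k j + r j + r (Q + 1) + ((M : ℝ) - 1) * s ≤ Tot := by
      intro hM j h1 h2
      obtain ⟨B, hB, hBc, hBs⟩ := avg_subset' r (M - 1) T s (by omega) hs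
      have hqB : Q + 1 ∉ B := fun h => by have := hTm _ (hB h); omega
      have hjB : j ∉ insert (Q + 1) B := fun h => by
        rcases Finset.mem_insert.1 h with h | h
        · omega
        · have := hTm _ (hB h); omega
      have := hcomp j h1 (by omega) (insert j (insert (Q + 1) B)) (Finset.mem_insert_self _ _)
        (by rw [Finset.card_insert_of_notMem hjB, Finset.card_insert_of_notMem hqB, hBc]; omega) ?_
      · rw [Finset.sum_insert hjB, Finset.sum_insert hqB] at this
        rw [Nat.cast_sub hM, Nat.cast_one] at hBs
        linarith
      · intro i hi
        rcases Finset.mem_insert.1 hi with h | h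
        · omega
        · rcases Finset.mem_insert.1 h with h | h
          · omega
          · have := hTm _ (hB h); omega
    have hRM : (R : ℝ) ≤ M := by exact_mod_cast hR
    have hQ1 : (1 : ℝ) ≤ Q := by exact_mod_cast hQ
    have hR0 : (0 : ℝ) ≤ R := Nat.cast_nonneg R
    have hD : ∀ j ∈ Finset.Icc 1 Q,
        (Q : ℝ) * (M + 1) * (k j + r j) ≤
          Q * (M + 1) * (Tot - M * s) - R * (r (Q + 1) - s) := by
      intro j hj
      rw [Finset.mem_Icc] at hj
      have a := hA j hj.1 (by omega)
      have b : (R : ℝ) * (k j + r j + r (Q + 1) + ((M : ℝ) - 1) * s) ≤ R * Tot := by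
        rcases Nat.eq_zero_or_pos R with h | h
        · simp [h]
        · exact mul_le_mul_of_nonneg_left (hBB (by omega) j hj.1 hj.2) hR0
      have hc : (0 : ℝ) ≤ Q * (M + 1) - R := by nlinarith
      have a' := mul_le_mul_of_nonneg_left a hc
      linarith
    have hsumD := Finset.sum_le_sum hD
    rw [← Finset.mul_sum, Finset.sum_add_distrib, Finset.sum_const, Nat.card_Icc,
      nsmul_eq_mul, Nat.add_sub_cancel, mul_assoc] at hsumD
    have hsumD' := le_of_mul_le_mul_left hsumD (by linarith)
    have hC := mul_le_mul_of_nonneg_left (hA (Q + 1) (by omega) le_rfl)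
      (by linarith : (0 : ℝ) ≤ M + 1 - R)
    rw [hval, ← Finset.mul_sum]
    refine le_of_mul_le_mul_left ?_ hP0
    have hl : (P : ℝ) * (((N : ℝ) - P) / P * ∑ i ∈ Finset.Icc 1 Q, k i
        + ((N : ℝ) + Q * ((P : ℝ) - N)) / P * k (Q + 1))
        = (M + 1) * ∑ i ∈ Finset.Icc 1 Q, k i + (M + 1 - R) * k (Q + 1) := by
      have x1 : (N : ℝ) - P = M + 1 := by linarith
      have x2 : (N : ℝ) + Q * ((P : ℝ) - N) = M + 1 - R := by
        have : (P : ℝ) - N = -(M + 1) := by linarith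
        rw [this]; linarith
      rw [x1, x2]; field_simp
    rw [hl]
    have hNe : (N : ℝ) = (M + 1) * (Q + 1) - R := by linarith
    have hPe : (P : ℝ) = (M + 1) * (Q + 1) - R - (M + 1) := by linarith
    rw [hNe] at hTotal
    rw [hPe]
    have hTM : ((M : ℝ) + 1) * Tot = (M + 1) * (∑ i ∈ Finset.Icc 1 Q, r i + r (Q + 1)
      + ((M + 1) * (Q + 1) - R - Q - 1) * s) := by rw [← hTotal]
    linarith
end

section
/- For every real $\alpha$ with $0<\alpha<1$ and all integers $V,P$ with $1\le V<P$, $\dfrac{(1-\alpha)^{P-V}-(1-\alpha)^{P}}{1-(1-\alpha)^{P}}\ <\ \dfrac{V}{P}$. Equivalently, with $Z_{M,V}=\dfrac{(1-\alpha)^{-M-V}-(1-\alpha)^{-M}}{(1-\alpha)^{-N}-1}$ for any integers $M\ge 0$ and $N>M+P$, one has $\dfrac{Z_{M,V}}{Z_{M,P}}<\dfrac{V}{P}$. -/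
theorem aux_low (q : ℝ) (h0 : 0 < q) (h1 : q < 1) (m : ℕ) :
    ((m : ℝ) + 1) * (1 - q) * q ^ m ≤ 1 - q ^ (m + 1) := by
  induction m with
  | zero => simp
  | succ m ih =>
    have h2 : q ^ (m + 1) ≤ 1 := pow_le_one₀ h0.le h1.le
    have h3 := mul_le_mul_of_nonneg_left ih h0.le
    have e : q ^ (m + 1 + 1) = q * q ^ (m + 1) := by ring
    have e2 : q * (((m : ℝ) + 1) * (1 - q) * q ^ m) = ((m : ℝ) + 1) * (1 - q) * q ^ (m + 1) := by
      ring
    rw [e2] at h3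
    push_cast
    rw [e]
    nlinarith [mul_le_mul_of_nonneg_left h2 (sub_pos.2 h1).le]

theorem aux_main (q : ℝ) (h0 : 0 < q) (h1 : q < 1) (V m : ℕ) (hV : 1 ≤ V) :
    (q ^ (m + 1) - q ^ (V + (m + 1))) / (1 - q ^ (V + (m + 1)))
      < (V : ℝ) / ((V + (m + 1) : ℕ) : ℝ) := by
  have hV' : (0 : ℝ) < V := by exact_mod_cast hV
  have hq : q ^ (V + (m + 1)) < 1 := pow_lt_one₀ h0.le h1 (by omega)
  have a := aux_low q h0 h1 m
  have b : 1 + (V : ℝ) * (q - 1) ≤ (1 + (q - 1)) ^ V := one_add_mul_le_pow (by linarith) V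
  rw [add_sub_cancel] at b
  have c : q ^ (m + 1) < q ^ m := pow_lt_pow_right_of_lt_one₀ h0 h1 (by omega)
  have hm : (0 : ℝ) < (m : ℝ) + 1 := by positivity
  have s1 := mul_le_mul_of_nonneg_left a hV'.le
  have s2 := mul_le_mul_of_nonneg_left b (mul_pos hm (pow_pos h0 (m + 1))).le
  have s3 := mul_lt_mul_of_pos_left c (mul_pos (mul_pos hV' hm) (sub_pos.2 h1))
  rw [div_lt_div_iff₀ (by linarith) (by positivity)]
  push_cast
  rw [pow_add q V (m + 1)]
  nlinarith

/-- inequalities (25)/(26) of the paper: for `0 < α < 1` and integers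
`1 ≤ V < P`, one has `((1-α)^(P-V) - (1-α)^P) / (1 - (1-α)^P) < V / P`; equivalently,
with `Z (M, v) = ((1-α)^{-M-v} - (1-α)^{-M}) / ((1-α)^{-N} - 1)` for any integers
`M ≥ 0` and `N > M + P`, one has `Z (M, V) / Z (M, P) < V / P`. -/
theorem stmt_12 (α : ℝ) (h0 : 0 < α) (h1 : α < 1) (V P : ℕ) (hV : 1 ≤ V)
    (hVP : V < P) :
    (((1 - α) ^ (P - V) - (1 - α) ^ P) / (1 - (1 - α) ^ P) < (V : ℝ) / P) ∧
    (∀ M N : ℕ, M + P < N →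
      ((((1 - α) ^ (-((M : ℤ) + (V : ℤ))) - (1 - α) ^ (-(M : ℤ))) /
          ((1 - α) ^ (-(N : ℤ)) - 1)) /
        (((1 - α) ^ (-((M : ℤ) + (P : ℤ))) - (1 - α) ^ (-(M : ℤ))) /
          ((1 - α) ^ (-(N : ℤ)) - 1))
        < (V : ℝ) / P)) := by
  have hq0 : 0 < 1 - α := by linarith
  have hq1 : 1 - α < 1 := by linarith
  generalize 1 - α = q at hq0 hq1 ⊢
  obtain ⟨m, rfl⟩ : ∃ m, P = V + (m + 1) := ⟨P - V - 1, by omega⟩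
  have key := aux_main q hq0 hq1 V m hV
  refine ⟨by rwa [Nat.add_sub_cancel_left], fun M N hN => ?_⟩
  refine lt_of_eq_of_lt ?_ key
  have hN1 : q ^ N < 1 := pow_lt_one₀ hq0.le hq1 (by omega)
  have hP1 : q ^ (V + (m + 1)) < 1 := pow_lt_one₀ hq0.le hq1 (by omega)
  have hNi : q ^ (-(N : ℤ)) - 1 ≠ 0 := by
    rw [zpow_neg, zpow_natCast]
    have := (one_lt_inv₀ (pow_pos hq0 N)).2 hN1
    linarith
  rw [div_div_div_cancel_right₀ hNi]
  have e : ∀ n : ℕ, q ^ (-((M : ℤ) + (n : ℤ))) - q ^ (-(M : ℤ))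
      = (q ^ M)⁻¹ * ((1 - q ^ n) / q ^ n) := by
    intro n
    have := (pow_pos hq0 n).ne'
    rw [neg_add, zpow_add₀ hq0.ne', zpow_neg, zpow_neg, zpow_natCast, zpow_natCast]
    field_simp
  rw [e, e, mul_div_mul_left _ _ (inv_ne_zero (pow_pos hq0 M).ne')]
  have h3 : 1 - q ^ (V + (m + 1)) ≠ 0 := by linarith
  have h4 := (pow_pos hq0 V).ne'
  have h5 := (pow_pos hq0 (V + (m + 1))).ne'
  rw [div_div_div_eq, div_eq_div_iff (mul_ne_zero h4 h3) h3, pow_add q V (m + 1)]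
  ring
end

section
/- Let $N\ge 1$ and let $X_1,\dots,X_N$ be finite sets. For $i\ne j$ in $[N]$ let $k_{i,j}=\bigl|\bigl(\bigcup_{l\in[N]\setminus\{j\}}X_l\bigr)\setminus X_i\bigr|$. Then for all $m_1,m_2,n_1,n_2\in[N]$ with $\{m_1,m_2\}\cap\{n_1,n_2\}=\emptyset$ and $n_1\ne n_2$ (indices within each pair may coincide), $k_{m_1,n_1}-k_{m_1,n_2}=k_{m_2,n_1}-k_{m_2,n_2}$. -/
/-- Lemma 8 of the paper: with clients `1,…,N` holding finite packet
sets `X i` and `k i j = |(⋃_{l ∈ [N] \ {j}} X l) \ X i|` for `i ≠ j`, for all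
`m₁, m₂, n₁, n₂ ∈ [N]` with `{m₁, m₂} ∩ {n₁, n₂} = ∅` and `n₁ ≠ n₂`,
`k m₁ n₁ - k m₁ n₂ = k m₂ n₁ - k m₂ n₂`. -/
theorem stmt_13 {γ : Type*} [DecidableEq γ] (N : ℕ) (hN : 1 ≤ N) (X : ℕ → Finset γ)
    (k : ℕ → ℕ → ℕ)
    (hk : ∀ i j, k i j = ((((Finset.Icc 1 N).erase j).biUnion X) \ X i).card)
    (m₁ m₂ n₁ n₂ : ℕ)
    (hm₁ : m₁ ∈ Finset.Icc 1 N) (hm₂ : m₂ ∈ Finset.Icc 1 N)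
    (hn₁ : n₁ ∈ Finset.Icc 1 N) (hn₂ : n₂ ∈ Finset.Icc 1 N)
    (h₁₁ : m₁ ≠ n₁) (h₁₂ : m₁ ≠ n₂) (h₂₁ : m₂ ≠ n₁) (h₂₂ : m₂ ≠ n₂)
    (hn : n₁ ≠ n₂) :
    (k m₁ n₁ : ℤ) - (k m₁ n₂ : ℤ) = (k m₂ n₁ : ℤ) - (k m₂ n₂ : ℤ) := by
  have key : ∀ i j, i ∈ Finset.Icc 1 N → i ≠ j →
      (k i j : ℤ) = ((((Finset.Icc 1 N).erase j).biUnion X).card : ℤ) - ((X i).card : ℤ) := by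
    intro i j hi hij
    have hsub : X i ⊆ ((Finset.Icc 1 N).erase j).biUnion X :=
      Finset.subset_biUnion_of_mem X (Finset.mem_erase.mpr ⟨hij, hi⟩)
    have h := Finset.card_sdiff_add_card_eq_card hsub
    rw [← hk i j] at h
    omega
  rw [key m₁ n₁ hm₁ h₁₁, key m₁ n₂ hm₁ h₁₂, key m₂ n₁ hm₂ h₂₁, key m₂ n₂ hm₂ h₂₂]
  ring
end

section
/- Let $N\ge 3$ and let $X_1,\dots,X_N$ be finite sets, and for $i\ne j$ let $k_{i,j}=\bigl|\bigl(\bigcup_{l\in[N]\setminus\{j\}}X_l\bigr)\setminus X_i\bigr|$. Assume the labeling satisfies $k_{i,j}\ge k_{j,i}$ for all $1\le i<j\le N$. Then for all $1\le n<m_1\le m_2\le N$, $k_{m_1,n}-k_{m_2,n}\ \ge\ k_{n,m_1}-k_{n,m_2}$. -/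
/-- Lemma 9 of the paper: with clients `1,…,N` (`N ≥ 3`) holding finite
packet sets `X i`, `k i j = |(⋃_{l ∈ [N] \ {j}} X l) \ X i|` for `i ≠ j`, and the
labeling condition `k i j ≥ k j i` for all `1 ≤ i < j ≤ N`, for all
`1 ≤ n < m₁ ≤ m₂ ≤ N` one has `k m₁ n - k m₂ n ≥ k n m₁ - k n m₂`. -/
theorem stmt_14 {γ : Type*} [DecidableEq γ] (N : ℕ) (hN : 3 ≤ N) (X : ℕ → Finset γ)
    (k : ℕ → ℕ → ℕ)
    (hk : ∀ i j, k i j = ((((Finset.Icc 1 N).erase j).biUnion X) \ X i).card)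
    (hlabel : ∀ i j, 1 ≤ i → i < j → j ≤ N → k j i ≤ k i j)
    (n m₁ m₂ : ℕ) (hn : 1 ≤ n) (hnm₁ : n < m₁) (hm₁₂ : m₁ ≤ m₂) (hm₂ : m₂ ≤ N) :
    (k n m₁ : ℤ) - (k n m₂ : ℤ) ≤ (k m₁ n : ℤ) - (k m₂ n : ℤ) := by
  have key : ∀ i j, 1 ≤ i → i ≤ N → i ≠ j →
      k i j + (X i).card = (((Finset.Icc 1 N).erase j).biUnion X).card := by
    intro i j h1 h2 h3
    rw [hk]
    apply Finset.card_sdiff_add_card_eq_card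
    exact Finset.subset_biUnion_of_mem X
      (Finset.mem_erase.2 ⟨h3, Finset.mem_Icc.2 ⟨h1, h2⟩⟩)
  rcases hm₁₂.eq_or_lt with rfl | hlt
  · simp
  · have a := key n m₁ (by omega) (by omega) (by omega)
    have b := key n m₂ (by omega) (by omega) (by omega)
    have c := key m₁ n (by omega) (by omega) (by omega)
    have d := key m₂ n (by omega) (by omega) (by omega)
    have e := key m₁ m₂ (by omega) (by omega) (by omega)
    have f := key m₂ m₁ (by omega) (by omega) (by omega)
    have g := hlabel m₁ m₂ (by omega) hlt hm₂
    omega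
end

section
/- Let $Q\ge 1$ and $R\in\{0,1\}$ be integers, $N=2(Q+1)-R$, and let $X_1,\dots,X_N$ be finite sets with $k_{i,j}=\bigl|\bigl(\bigcup_{l\in[N]\setminus\{j\}}X_l\bigr)\setminus X_i\bigr|$ for $i\ne j$, satisfying the labeling condition $k_{i,j}\ge k_{j,i}$ for all $1\le i<j\le N$. Define, for $1\le m<n\le N$: $\lambda_{m,n}=k_{m,N}-k_{1,N}+k_{1,N-Q}-k_{N-Q,N}+k_{n,N}$ if $n\le N-Q$; $\lambda_{m,n}=k_{m,N}-k_{1,N}+k_{1,n}$ if $m\le N-Q<n$; and $\lambda_{m,n}=k_{1,m}-k_{1,N}+k_{N-Q,N}-k_{1,N-Q}+k_{1,n}$ if $N-Q<m$. Then $\lambda_{m,n}\ge k_{m,n}$ for all $1\le m<n\le N$. -/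
/-- Lemma 10 of the paper: with `Q ≥ 1`, `R ∈ {0,1}`, `N = 2(Q+1) - R`,
clients `1,…,N` holding finite packet sets `X i`,
`k i j = |(⋃_{l ∈ [N] \ {j}} X l) \ X i|` for `i ≠ j`, labeled so that `k i j ≥ k j i`
for `1 ≤ i < j ≤ N`, and `λ m n` defined for `1 ≤ m < n ≤ N` by
`λ m n = k m N - k 1 N + k 1 (N-Q) - k (N-Q) N + k n N` if `n ≤ N - Q`,
`λ m n = k m N - k 1 N + k 1 n` if `m ≤ N - Q < n`, and
`λ m n = k 1 m - k 1 N + k (N-Q) N - k 1 (N-Q) + k 1 n` if `N - Q < m`;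
then `λ m n ≥ k m n` for all `1 ≤ m < n ≤ N`. -/
theorem stmt_15 {γ : Type*} [DecidableEq γ] (Q R N : ℕ) (hQ : 1 ≤ Q) (hR : R ≤ 1)
    (hN : N + R = 2 * (Q + 1)) (X : ℕ → Finset γ)
    (k : ℕ → ℕ → ℕ)
    (hk : ∀ i j, k i j = ((((Finset.Icc 1 N).erase j).biUnion X) \ X i).card)
    (hlabel : ∀ i j, 1 ≤ i → i < j → j ≤ N → k j i ≤ k i j)
    (lam : ℕ → ℕ → ℤ)
    (hlam1 : ∀ m n, 1 ≤ m → m < n → n ≤ N - Q →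
      lam m n = (k m N : ℤ) - k 1 N + k 1 (N - Q) - k (N - Q) N + k n N)
    (hlam2 : ∀ m n, 1 ≤ m → m ≤ N - Q → N - Q < n → n ≤ N →
      lam m n = (k m N : ℤ) - k 1 N + k 1 n)
    (hlam3 : ∀ m n, N - Q < m → m < n → n ≤ N →
      lam m n = (k 1 m : ℤ) - k 1 N + k (N - Q) N - k 1 (N - Q) + k 1 n) :
    ∀ m n, 1 ≤ m → m < n → n ≤ N → (k m n : ℤ) ≤ lam m n := by
  obtain ⟨a, e, h⟩ : ∃ a e : ℕ → ℤ, ∀ i j, 1 ≤ i → i ≤ N → i ≠ j →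
      (k i j : ℤ) = a i - e j := by
    refine ⟨fun i => (((Finset.Icc 1 N).biUnion X \ X i).card : ℤ),
      fun j => (((Finset.Icc 1 N).biUnion X \ ((Finset.Icc 1 N).erase j).biUnion X).card : ℤ), ?_⟩
    intro i j h1 h2 hij
    have hsub : X i ⊆ ((Finset.Icc 1 N).erase j).biUnion X :=
      Finset.subset_biUnion_of_mem X (by simp [hij, h1, h2])
    have hVU : ((Finset.Icc 1 N).erase j).biUnion X ⊆ (Finset.Icc 1 N).biUnion X :=
      Finset.biUnion_subset_biUnion_of_subset_left X (Finset.erase_subset _ _)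
    have c1 := Finset.card_sdiff_add_card_eq_card hsub
    have c2 := Finset.card_sdiff_add_card_eq_card hVU
    have c3 := Finset.card_sdiff_add_card_eq_card (hsub.trans hVU)
    have c4 := hk i j
    dsimp only
    omega
  have hs : ∀ i j, 1 ≤ i → i ≤ j → j ≤ N → a j + e j ≤ a i + e i := by
    intro i j h1 h2 h3
    rcases Nat.eq_or_lt_of_le h2 with rfl | h2
    · exact le_refl _
    · have l := hlabel i j h1 h2 h3
      have p := h i j h1 (by omega) (by omega)
      have q := h j i (by omega) h3 (by omega)
      omega
  intro m n hm hmn hn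
  have f1 := h m n hm (by omega) (by omega)
  have f2 := h 1 N le_rfl (by omega) (by omega)
  have f3 := h 1 (N - Q) le_rfl (by omega) (by omega)
  have f4 := h (N - Q) N (by omega) (by omega) (by omega)
  have f5 := h 1 n le_rfl (by omega) (by omega)
  have f6 := h m N hm (by omega) (by omega)
  by_cases c : n ≤ N - Q
  · have f7 := h n N (by omega) (by omega) (by omega)
    have := hs n (N - Q) (by omega) c (by omega)
    rw [hlam1 m n hm hmn c]
    linarith
  · by_cases d : m ≤ N - Q
    · rw [hlam2 m n hm d (by omega) hn]
      linarith
    · have f7 := h 1 m le_rfl (by omega) (by omega)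
      have := hs (N - Q) m (by omega) (by omega) (by omega)
      rw [hlam3 m n (by omega) hmn hn]
      linarith
end

section
/- Let $Q\ge 1$ and $R\in\{0,1\}$ be integers, $N=2(Q+1)-R$, $P=N-2$, and let reals $k_{i,j}$ ($1\le i\ne j\le N$) be given. Define $\lambda_{m,n}$ for $1\le m<n\le N$ by: $\lambda_{m,n}=k_{m,N}-k_{1,N}+k_{1,N-Q}-k_{N-Q,N}+k_{n,N}$ if $n\le N-Q$; $\lambda_{m,n}=k_{m,N}-k_{1,N}+k_{1,n}$ if $m\le N-Q<n$; $\lambda_{m,n}=k_{1,m}-k_{1,N}+k_{N-Q,N}-k_{1,N-Q}+k_{1,n}$ if $N-Q<m$. Define $\tilde r=\tfrac1P\sum_{i=1}^{N-Q-1}k_{i,N}+\tfrac{Q}{P}k_{N-Q,N}+\tfrac1P\sum_{i=N-Q+1}^{N-1}k_{1,i}+\tfrac{N-Q-1}{P}k_{1,N-Q}$, and $\tilde r_i=\tilde r-k_{i,N}-k_{1,N-Q}$ for $1\le i\le N-Q$, $\tilde r_i=\tilde r-k_{N-Q,N}-k_{1,i}$ for $N-Q<i\le N$. Then for all $1\le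 m<n\le N$, $\sum_{i\in[N]\setminus\{m,n\}}\tilde r_i=\lambda_{m,n}$ (so every constraint of LP(16) holds with equality). -/
/-- Lemma 12 of the paper, feasibility with equality for LP(16): with
`Q ≥ 1`, `R ∈ {0,1}`, `N = 2(Q+1) - R`, `P = N - 2`, arbitrary reals `k i j` (`i ≠ j`),
`λ m n` defined for `1 ≤ m < n ≤ N` as in equation (15),
`r̃ = (1/P) ∑_{i=1}^{N-Q-1} k i N + (Q/P) k (N-Q) N + (1/P) ∑_{i=N-Q+1}^{N-1} k 1 i
  + ((N-Q-1)/P) k 1 (N-Q)`, and `r̃ i = r̃ - k i N - k 1 (N-Q)` for `1 ≤ i ≤ N-Q`,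
`r̃ i = r̃ - k (N-Q) N - k 1 i` for `N-Q < i ≤ N`: for all `1 ≤ m < n ≤ N`,
`∑_{i ∈ [N] \ {m,n}} r̃ i = λ m n`, so every constraint of LP(16) holds with equality. -/
theorem stmt_16 (Q R N P : ℕ) (hQ : 1 ≤ Q) (hR : R ≤ 1)
    (hN : N + R = 2 * (Q + 1)) (hP : P + 2 = N)
    (k : ℕ → ℕ → ℝ) (lam : ℕ → ℕ → ℝ)
    (hlam1 : ∀ m n, 1 ≤ m → m < n → n ≤ N - Q →
      lam m n = k m N - k 1 N + k 1 (N - Q) - k (N - Q) N + k n N)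
    (hlam2 : ∀ m n, 1 ≤ m → m ≤ N - Q → N - Q < n → n ≤ N →
      lam m n = k m N - k 1 N + k 1 n)
    (hlam3 : ∀ m n, N - Q < m → m < n → n ≤ N →
      lam m n = k 1 m - k 1 N + k (N - Q) N - k 1 (N - Q) + k 1 n)
    (rb : ℝ)
    (hrb : rb = (∑ i ∈ Finset.Icc 1 (N - Q - 1), k i N) / P
      + (Q : ℝ) / P * k (N - Q) N
      + (∑ i ∈ Finset.Icc (N - Q + 1) (N - 1), k 1 i) / P
      + ((N : ℝ) - Q - 1) / P * k 1 (N - Q))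
    (rt : ℕ → ℝ)
    (hrt1 : ∀ i, 1 ≤ i → i ≤ N - Q → rt i = rb - k i N - k 1 (N - Q))
    (hrt2 : ∀ i, N - Q < i → i ≤ N → rt i = rb - k (N - Q) N - k 1 i) :
    ∀ m n, 1 ≤ m → m < n → n ≤ N →
      ∑ i ∈ Finset.Icc 1 N \ {m, n}, rt i = lam m n := by
  intro m n hm hmn hn
  obtain ⟨q, rfl⟩ : ∃ q, Q = q + 1 := ⟨Q - 1, by omega⟩
  obtain ⟨t, rfl⟩ : ∃ t, N = (t + 1) + (q + 1) := ⟨N - q - 2, by omega⟩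
  have e1 : t + 1 + (q + 1) - (q + 1) = t + 1 := by omega
  have e2 : t + 1 - 1 = t := by omega
  have e3 : t + 1 + (q + 1) - 1 = t + 1 + q := by omega
  simp only [e1] at hlam1 hlam2 hlam3 hrb hrt1 hrt2
  rw [e2, e3] at hrb
  have hP0 : (P : ℝ) ≠ 0 := by
    have : P ≠ 0 := by omega
    exact_mod_cast this
  have hPc : (P : ℝ) = t + q := by
    have : P = t + q := by omega
    exact_mod_cast this
  have hPrb : (P : ℝ) * rb = (∑ i ∈ Finset.Icc 1 t, k i (t + 1 + (q + 1)))
      + ((q : ℝ) + 1) * k (t + 1) (t + 1 + (q + 1))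
      + (∑ i ∈ Finset.Icc (t + 1 + 1) (t + 1 + q), k 1 i)
      + (t : ℝ) * k 1 (t + 1) := by
    rw [hrb]
    field_simp
    push_cast
    ring
  have hsplit : ∑ i ∈ Finset.Icc 1 (t + 1 + (q + 1)), rt i
      = ∑ i ∈ Finset.Icc 1 (t + 1), rt i
        + ∑ i ∈ Finset.Icc (t + 1 + 1) (t + 1 + (q + 1)), rt i := by
    rw [← Finset.sum_union]
    · congr 1
      ext i
      simp only [Finset.mem_union, Finset.mem_Icc]
      omega
    · rw [Finset.disjoint_left]
      intro i
      simp only [Finset.mem_Icc]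
      omega
  have hA : ∑ i ∈ Finset.Icc 1 (t + 1), rt i
      = ((t : ℝ) + 1) * (rb - k 1 (t + 1))
        - (∑ i ∈ Finset.Icc 1 t, k i (t + 1 + (q + 1)) + k (t + 1) (t + 1 + (q + 1))) := by
    rw [← Finset.sum_Icc_succ_top (by omega : 1 ≤ t + 1) (fun i => k i (t + 1 + (q + 1)))]
    rw [Finset.sum_congr rfl (g := fun i => (rb - k 1 (t + 1)) - k i (t + 1 + (q + 1)))]
    · rw [Finset.sum_sub_distrib]
      simp
      try ring
    · intro i hi
      rw [Finset.mem_Icc] at hi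
      rw [hrt1 i hi.1 hi.2]
      ring
  have hB : ∑ i ∈ Finset.Icc (t + 1 + 1) (t + 1 + (q + 1)), rt i
      = ((q : ℝ) + 1) * (rb - k (t + 1) (t + 1 + (q + 1)))
        - (∑ i ∈ Finset.Icc (t + 1 + 1) (t + 1 + q), k 1 i + k 1 (t + 1 + (q + 1))) := by
    have h := Finset.sum_Icc_succ_top (by omega : t + 1 + 1 ≤ t + 1 + q + 1) (fun i => k 1 i)
    have e : t + 1 + q + 1 = t + 1 + (q + 1) := by omega
    rw [e] at h
    rw [← h]
    rw [Finset.sum_congr rfl (g := fun i => (rb - k (t + 1) (t + 1 + (q + 1))) - k 1 i)]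
    · have e4 : t + 1 + (q + 1) + 1 - (t + 1 + 1) = q + 1 := by omega
      rw [Finset.sum_sub_distrib, Finset.sum_const, Nat.card_Icc, e4]
      simp
      try ring
    · intro i hi
      rw [Finset.mem_Icc] at hi
      exact hrt2 i (by omega) hi.2
  have hsub : ({m, n} : Finset ℕ) ⊆ Finset.Icc 1 (t + 1 + (q + 1)) := by
    intro i
    simp only [Finset.mem_insert, Finset.mem_singleton, Finset.mem_Icc]
    omega
  have hD := Finset.sum_sdiff (f := rt) hsub
  rw [Finset.sum_pair (by omega : m ≠ n), hsplit, hA, hB] at hD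
  rw [hPc] at hPrb
  by_cases h1 : n ≤ t + 1
  · rw [hlam1 m n hm hmn h1]
    rw [hrt1 m hm (by omega), hrt1 n (by omega) h1] at hD
    linarith
  · by_cases h2 : m ≤ t + 1
    · rw [hlam2 m n hm h2 (by omega) hn]
      rw [hrt1 m hm h2, hrt2 n (by omega) hn] at hD
      linarith
    · rw [hlam3 m n (by omega) hmn hn]
      rw [hrt2 m (by omega) (by omega), hrt2 n (by omega) hn] at hD
      linarith
end

section
/- Let $Q\ge 1$ and $R\in\{0,1\}$ be integers, $N=2(Q+1)-R$, $P=N-2$, and let reals $k_{i,j}$ ($1\le i\ne j\le N$) be given, with $\lambda_{m,n}$, $\tilde r$ and $\tilde r_1,\dots,\tilde r_N$ defined as in LP(16) and equation (12). Then $(\tilde r_1,\dots,\tilde r_N)$ is an optimal solution of LP(16): it satisfies all constraints $\sum_{i\in[N]\setminus\{m,n\}}\tilde r_i\ge\lambda_{m,n}$; its value satisfies $\sum_{i=1}^{N}\tilde r_i=\tfrac{2-P}{P}k_{1,N}+\sum_{i=2}^{N-Q-1}\tfrac{2}{P}k_{i,N}+\tfrac{R}{P}k_{N-Q,N}+\sum_{i=N-Q+1}^{N-1}\tfrac{2}{P}k_{1,i}+\tfrac{2-R}{P}k_{1,N-Q}$;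 and every $(r_1,\dots,r_N)$ satisfying all the constraints has $\sum_{i=1}^N r_i\ge\sum_{i=1}^N\tilde r_i$. -/
theorem sdiff_pair_sum (N m n : ℕ) (r : ℕ → ℝ) (hm : 1 ≤ m) (hmn : m < n) (hn : n ≤ N) :
    ∑ i ∈ Finset.Icc 1 N \ {m, n}, r i = ∑ i ∈ Finset.Icc 1 N, r i - r m - r n := by
  have hsub : ({m, n} : Finset ℕ) ⊆ Finset.Icc 1 N := by
    intro x hx
    simp only [Finset.mem_insert, Finset.mem_singleton] at hx
    simp only [Finset.mem_Icc]
    omega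
  have h := Finset.sum_sdiff (f := r) hsub
  rw [Finset.sum_pair hmn.ne] at h
  linarith

/-- Averaging the pair constraints around a cycle. -/
theorem cyc_nonneg (N : ℕ) (hN : 3 ≤ N) (d : ℕ → ℝ) (D : ℝ)
    (hD : D = ∑ i ∈ Finset.Icc 1 N, d i)
    (h : ∀ m n, 1 ≤ m → m < n → n ≤ N → d m + d n ≤ D) : 0 ≤ D := by
  have key : ∀ t : ℕ, t + 1 ≤ N →
      ∑ i ∈ Finset.Icc 1 t, d i + ∑ i ∈ Finset.Icc 1 (t + 1), d i - d 1 ≤ t * D := by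
    intro t
    induction t with
    | zero => intro _; simp
    | succ t ih =>
      intro ht
      have h1 := ih (by omega)
      have h2 := h (t + 1) (t + 2) (by omega) (by omega) (by omega)
      rw [Finset.sum_Icc_succ_top (by omega : 1 ≤ t + 1 + 1)]
      have h3 := Finset.sum_Icc_succ_top (by omega : 1 ≤ t + 1) d
      push_cast
      have e : t + 1 + 1 = t + 2 := rfl
      rw [e]
      linarith
  obtain ⟨M, rfl⟩ : ∃ M, N = M + 1 := ⟨N - 1, by omega⟩
  have h1 := key M le_rfl
  have h2 := h 1 (M + 1) le_rfl (by omega) le_rfl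
  have h3 := Finset.sum_Icc_succ_top (by omega : 1 ≤ M + 1) d
  have hM : (2 : ℝ) ≤ M := by exact_mod_cast (by omega : 2 ≤ M)
  have h4 : 0 ≤ ((M : ℝ) - 1) * D := by linarith
  by_contra hneg
  push Not at hneg
  nlinarith


/-- Lemma 11 of the paper, closed-form exact solution of the
over-constrained `M = 1` LP(16): with `Q ≥ 1`, `R ∈ {0,1}`, `N = 2(Q+1) - R`,
`P = N - 2`, arbitrary reals `k i j` (`i ≠ j`), `λ m n` as in equation (15), and
`r̃, r̃ 1, …, r̃ N` as in equation (12): `(r̃ 1, …, r̃ N)` satisfies all constraints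
`∑_{i ∈ [N] \ {m,n}} r̃ i ≥ λ m n`, its value is
`∑_{i=1}^{N} r̃ i = ((2-P)/P) k 1 N + ∑_{i=2}^{N-Q-1} (2/P) k i N + (R/P) k (N-Q) N
  + ∑_{i=N-Q+1}^{N-1} (2/P) k 1 i + ((2-R)/P) k 1 (N-Q)`, and every
`(r 1, …, r N)` satisfying all the constraints has `∑_{i=1}^N r i ≥ ∑_{i=1}^N r̃ i`. -/
theorem stmt_17 (Q R N P : ℕ) (hQ : 1 ≤ Q) (hR : R ≤ 1)
    (hN : N + R = 2 * (Q + 1)) (hP : P + 2 = N)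
    (k : ℕ → ℕ → ℝ) (lam : ℕ → ℕ → ℝ)
    (hlam1 : ∀ m n, 1 ≤ m → m < n → n ≤ N - Q →
      lam m n = k m N - k 1 N + k 1 (N - Q) - k (N - Q) N + k n N)
    (hlam2 : ∀ m n, 1 ≤ m → m ≤ N - Q → N - Q < n → n ≤ N →
      lam m n = k m N - k 1 N + k 1 n)
    (hlam3 : ∀ m n, N - Q < m → m < n → n ≤ N →
      lam m n = k 1 m - k 1 N + k (N - Q) N - k 1 (N - Q) + k 1 n)
    (rb : ℝ)
    (hrb : rb = (∑ i ∈ Finset.Icc 1 (N - Q - 1), k i N) / P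
      + (Q : ℝ) / P * k (N - Q) N
      + (∑ i ∈ Finset.Icc (N - Q + 1) (N - 1), k 1 i) / P
      + ((N : ℝ) - Q - 1) / P * k 1 (N - Q))
    (rt : ℕ → ℝ)
    (hrt1 : ∀ i, 1 ≤ i → i ≤ N - Q → rt i = rb - k i N - k 1 (N - Q))
    (hrt2 : ∀ i, N - Q < i → i ≤ N → rt i = rb - k (N - Q) N - k 1 i) :
    (∀ m n, 1 ≤ m → m < n → n ≤ N →
      lam m n ≤ ∑ i ∈ Finset.Icc 1 N \ {m, n}, rt i) ∧
    (∑ i ∈ Finset.Icc 1 N, rt i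
      = (2 - (P : ℝ)) / P * k 1 N
        + (∑ i ∈ Finset.Icc 2 (N - Q - 1), 2 / (P : ℝ) * k i N)
        + (R : ℝ) / P * k (N - Q) N
        + (∑ i ∈ Finset.Icc (N - Q + 1) (N - 1), 2 / (P : ℝ) * k 1 i)
        + (2 - (R : ℝ)) / P * k 1 (N - Q)) ∧
    (∀ r : ℕ → ℝ,
      (∀ m n, 1 ≤ m → m < n → n ≤ N →
        lam m n ≤ ∑ i ∈ Finset.Icc 1 N \ {m, n}, r i) →
      ∑ i ∈ Finset.Icc 1 N, rt i ≤ ∑ i ∈ Finset.Icc 1 N, r i) := by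
  have hPpos : (0 : ℝ) < P := by exact_mod_cast (by omega : 0 < P)
  have hPne : (P : ℝ) ≠ 0 := hPpos.ne'
  have hNP : (N : ℝ) = P + 2 := by exact_mod_cast hP.symm
  have hNR : (N : ℝ) + R = 2 * (Q + 1) := by exact_mod_cast hN
  obtain ⟨L, hL⟩ : ∃ L, L + 1 = N - Q := ⟨N - Q - 1, by omega⟩
  obtain ⟨K, hK⟩ : ∃ K, K + 1 = N := ⟨N - 1, by omega⟩
  have hLK : L + 1 ≤ K := by omega
  have hL1 : 1 ≤ L := by omega
  have hLr : (L : ℝ) + 1 + Q = N := by exact_mod_cast (by omega : L + 1 + Q = N)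
  have e1 : N - Q - 1 = L := by omega
  have e2 : N - 1 = K := by omega
  rw [e1, e2]
  rw [e1, e2] at hrb
  rw [← hL] at hlam1 hlam2 hlam3 hrt1 hrt2 hrb ⊢
  have hPrb : P * rb = (∑ i ∈ Finset.Icc 1 L, k i N) + Q * k (L + 1) N
      + (∑ i ∈ Finset.Icc (L + 1 + 1) K, k 1 i) + L * k 1 (L + 1) := by
    rw [hrb, show (N : ℝ) - Q - 1 = L by linarith]
    field_simp
  have split : ∑ i ∈ Finset.Icc 1 N, rt i
      = ∑ i ∈ Finset.Icc 1 (L + 1), rt i + ∑ i ∈ Finset.Icc (L + 1 + 1) N, rt i := by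
    rw [← Finset.sum_union]
    · congr 1
      ext x
      simp only [Finset.mem_Icc, Finset.mem_union]
      omega
    · rw [Finset.disjoint_left]
      intro x
      simp only [Finset.mem_Icc]
      omega
  have s1 : ∑ i ∈ Finset.Icc 1 (L + 1), rt i
      = (L + 1) * (rb - k 1 (L + 1)) - ∑ i ∈ Finset.Icc 1 L, k i N - k (L + 1) N := by
    have : ∑ i ∈ Finset.Icc 1 (L + 1), rt i
        = ∑ i ∈ Finset.Icc 1 (L + 1), ((rb - k 1 (L + 1)) - k i N) := by
      apply Finset.sum_congr rfl
      intro i hi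
      rw [Finset.mem_Icc] at hi
      rw [hrt1 i hi.1 hi.2]
      ring
    rw [this, Finset.sum_sub_distrib, Finset.sum_const, Nat.card_Icc,
      Finset.sum_Icc_succ_top (by omega : 1 ≤ L + 1), nsmul_eq_mul]
    have : L + 1 + 1 - 1 = L + 1 := by omega
    rw [this]
    push_cast
    ring
  have s2 : ∑ i ∈ Finset.Icc (L + 1 + 1) N, rt i
      = Q * (rb - k (L + 1) N) - ∑ i ∈ Finset.Icc (L + 1 + 1) K, k 1 i - k 1 N := by
    have : ∑ i ∈ Finset.Icc (L + 1 + 1) N, rt i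
        = ∑ i ∈ Finset.Icc (L + 1 + 1) N, ((rb - k (L + 1) N) - k 1 i) := by
      apply Finset.sum_congr rfl
      intro i hi
      rw [Finset.mem_Icc] at hi
      rw [hrt2 i (by omega) hi.2]
    have hs := Finset.sum_Icc_succ_top (by omega : L + 1 + 1 ≤ K + 1) (fun i => k 1 i)
    rw [hK] at hs
    rw [this, Finset.sum_sub_distrib, Finset.sum_const, Nat.card_Icc, nsmul_eq_mul, hs]
    have : N + 1 - (L + 1 + 1) = Q := by omega
    rw [this]
    ring
  have hS : ∑ i ∈ Finset.Icc 1 N, rt i = 2 * rb - k (L + 1) N - k 1 (L + 1) - k 1 N := by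
    rw [split, s1, s2]
    have hLP : (L : ℝ) = P + 1 - Q := by linarith
    rw [hLP] at hPrb ⊢
    linarith
  have tight : ∀ m n, 1 ≤ m → m < n → n ≤ N →
      lam m n = ∑ i ∈ Finset.Icc 1 N, rt i - rt m - rt n := by
    intro m n hm hmn hn
    rw [hS]
    by_cases h1 : n ≤ L + 1
    · rw [hlam1 m n hm hmn h1, hrt1 m hm (by omega), hrt1 n (by omega) h1]
      ring
    · by_cases h2 : m ≤ L + 1
      · rw [hlam2 m n hm h2 (by omega) hn, hrt1 m hm h2, hrt2 n (by omega) hn]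
        ring
      · rw [hlam3 m n (by omega) hmn hn, hrt2 m (by omega) (by omega), hrt2 n (by omega) hn]
        ring
  refine ⟨?_, ?_, ?_⟩
  · intro m n hm hmn hn
    rw [sdiff_pair_sum N m n rt hm hmn hn, tight m n hm hmn hn]
  · rw [hS, ← Finset.mul_sum, ← Finset.mul_sum]
    have hf : ∑ i ∈ Finset.Icc 1 L, k i N = k 1 N + ∑ i ∈ Finset.Icc 2 L, k i N :=
      (Finset.add_sum_Ioc_eq_sum_Icc (f := fun i => k i N) hL1).symm
    rw [hf] at hPrb
    have hRr : (R : ℝ) = 2 * Q - P := by linarith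
    have hLP : (L : ℝ) = P + 1 - Q := by linarith
    rw [hLP] at hPrb
    rw [hRr]
    field_simp
    linear_combination 2 * hPrb
  · intro r hr
    have := cyc_nonneg N (by omega) (fun i => r i - rt i)
      (∑ i ∈ Finset.Icc 1 N, (r i - rt i)) rfl (by
        intro m n hm hmn hn
        have h1 := hr m n hm hmn hn
        rw [sdiff_pair_sum N m n r hm hmn hn, tight m n hm hmn hn] at h1
        rw [Finset.sum_sub_distrib]
        linarith)
    rw [Finset.sum_sub_distrib] at this
    linarith
end

section
/- Let $N\ge 2$ and let $X_1,\dots,X_N$ be finite sets with $X=\bigcup_{i=1}^N X_i$ and $\overline X_i=X\setminus X_i$. If $(r_1,\dots,r_N)\in\mathbb R^N$ satisfies $\sum_{i\in\mathcal N} r_i\ge\bigl|\bigcap_{i\in[N]\setminus\mathcal N}\overline X_i\bigr|$ for every nonempty proper subset $\mathcal N\subsetneq[N]$, then $\sum_{i=1}^N r_i\ \ge\ \tfrac{1}{N-1}\sum_{j=1}^N|\overline X_j|$. Moreover, the vector with $\tilde r_i=\tfrac{1}{N-1}\sum_{j=1}^N|\overline X_j|-|\overline X_i|$ attains this bound, i.e.,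 $\sum_{i=1}^N\tilde r_i=\tfrac{1}{N-1}\sum_{j=1}^N|\overline X_j|$, and satisfies each size-$(N-1)$ constraint with equality: $\sum_{i\ne j}\tilde r_i=|\overline X_j|$ for every $j\in[N]$. -/
/-- deterministic content of Theorem 2, the Courtade–Xie–Wesel closed-form
solution of LP(1): for clients `1,…,N` (`N ≥ 2`) with packet sets `X i`, ground set
`X = ⋃ i, X i` and `X̄ i = X \ X i`: if `(r 1, …, r N)` satisfies
`∑_{i ∈ 𝒩} r i ≥ |⋂_{i ∈ [N] \ 𝒩} X̄ i|` for every nonempty proper `𝒩 ⊊ [N]`, then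
`∑_{i=1}^N r i ≥ (1/(N-1)) ∑_{j=1}^N |X̄ j|`.  Moreover, the vector with
`r̃ i = (1/(N-1)) ∑_{j=1}^N |X̄ j| - |X̄ i|` attains this bound,
`∑_i r̃ i = (1/(N-1)) ∑_j |X̄ j|`, and satisfies each size-`(N-1)` constraint with
equality: `∑_{i ≠ j} r̃ i = |X̄ j|` for every `j`. -/
theorem stmt_18 {γ : Type*} [DecidableEq γ] [Fintype γ] (N : ℕ) (hN : 2 ≤ N)
    (X : Fin N → Finset γ) (r : Fin N → ℝ)
    (hfeas : ∀ 𝒩 : Finset (Fin N), 𝒩.Nonempty → 𝒩 ≠ Finset.univ →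
      (((𝒩ᶜ.inf fun i => (Finset.univ.biUnion X) \ X i).card : ℝ) ≤ ∑ i ∈ 𝒩, r i)) :
    ((∑ j, (((Finset.univ.biUnion X) \ X j).card : ℝ)) / ((N : ℝ) - 1) ≤ ∑ i, r i) ∧
    (∀ rt : Fin N → ℝ,
      (∀ i, rt i = (∑ j, (((Finset.univ.biUnion X) \ X j).card : ℝ)) / ((N : ℝ) - 1)
          - (((Finset.univ.biUnion X) \ X i).card : ℝ)) →
      ((∑ i, rt i = (∑ j, (((Finset.univ.biUnion X) \ X j).card : ℝ)) / ((N : ℝ) - 1)) ∧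
        ∀ j, ∑ i ∈ Finset.univ.erase j, rt i
          = (((Finset.univ.biUnion X) \ X j).card : ℝ))) := by
  have hN1 : (0 : ℝ) < (N : ℝ) - 1 := by
    have : (2 : ℝ) ≤ (N : ℝ) := by exact_mod_cast hN
    linarith
  have key : ∀ j, (((Finset.univ.biUnion X) \ X j).card : ℝ) ≤ (∑ i, r i) - r j := by
    intro j
    have h1 : (Finset.univ.erase j : Finset (Fin N)).Nonempty := by
      rw [← Finset.card_pos, Finset.card_erase_of_mem (Finset.mem_univ j), Finset.card_univ,
        Fintype.card_fin]
      omega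
    have h2 : (Finset.univ.erase j : Finset (Fin N)) ≠ Finset.univ := by
      intro h
      have := Finset.mem_univ j
      rw [← h] at this
      simp at this
    have h3 : (Finset.univ.erase j : Finset (Fin N))ᶜ = {j} := by
      ext x
      simp
    have h := hfeas _ h1 h2
    rw [h3, Finset.inf_singleton] at h
    have h4 := Finset.add_sum_erase Finset.univ r (Finset.mem_univ j)
    linarith
  refine ⟨?_, ?_⟩
  · rw [div_le_iff₀ hN1]
    have h := Finset.sum_le_sum (fun j (_ : j ∈ Finset.univ) => key j)
    rw [Finset.sum_sub_distrib, Finset.sum_const, Finset.card_univ, Fintype.card_fin,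
      nsmul_eq_mul] at h
    linarith
  · intro rt hrt
    have hs : ∑ i, rt i
        = (∑ j, (((Finset.univ.biUnion X) \ X j).card : ℝ)) / ((N : ℝ) - 1) := by
      rw [Finset.sum_congr rfl (fun i _ => hrt i), Finset.sum_sub_distrib, Finset.sum_const,
        Finset.card_univ, Fintype.card_fin, nsmul_eq_mul]
      field_simp
      ring
    refine ⟨hs, fun j => ?_⟩
    have h4 := Finset.add_sum_erase Finset.univ rt (Finset.mem_univ j)
    have h5 := hrt j
    linarith
end
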